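/- arXiv:2003.09247 — 3 statements merged into one kernel-verified Lean document; each statement's English description precedes it below -/
import Mathlib

section
/- For every large enough even integer n, in the unbiased Waiter-Client game played on the edge set of the complete graph K_n whose winning sets are the perfect matchings of K_n, the minimum number of rounds within which Waiter can force a win is exactly n/2 + 1; that is, τ_WC(PM_n, 1) = n/2 + 1. -/
open Finset

/-- `WaiterWins board b win t Cl W` means: starting from the position where Client owns the
elements of `Cl` and Waiter owns the elements of `W`, Waiter can force that within the next `t`
rounds of the `b`-biased Waiter-Client game on the board `board` a position is reached in which
the predicate `win` holds of (Client's elements, Waiter's elements).  In each round Waiter offers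
`b+1` previously unclaimed board elements (or all remaining unclaimed elements, if fewer than
`b+1` remain); Client claims exactly one of them, the rest go to Waiter. -/
def WaiterWins {X : Type*} [DecidableEq X] (board : Finset X) (b : ℕ)
    (win : Finset X → Finset X → Prop) :
    ℕ → Finset X → Finset X → Prop
  | 0, Cl, W => win Cl W
  | (t+1), Cl, W => win Cl W ∨
      ∃ O : Finset X, O.Nonempty ∧ O ⊆ board \ (Cl ∪ W) ∧
        O.card = min (b + 1) ((board \ (Cl ∪ W)).card) ∧
        ∀ x ∈ O, WaiterWins board b win t (insert x Cl) (W ∪ O.erase x)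

/-- `tauWC board F b` : the smallest number of rounds within which Waiter can force Client's
elements to contain some member of the winning family `F`, in the `b`-biased Waiter-Client game
on the board `board`. -/
noncomputable def tauWC {X : Type*} [DecidableEq X] (board : Finset X)
    (F : Set (Finset X)) (b : ℕ) : ℕ :=
  sInf {t | WaiterWins board b (fun Cl _ => ∃ A ∈ F, A ⊆ Cl) t ∅ ∅}

/-- The edge set of the complete graph on `Fin n`. -/
def Kedges (n : ℕ) : Finset (Sym2 (Fin n)) :=
  Finset.univ.filter (fun e => ¬ e.IsDiag)

/-- The family of edge sets of perfect matchings of `K_n`: sets of non-diagonal edges such that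
every vertex lies in exactly one edge of the set. -/
def PMfamily (n : ℕ) : Set (Finset (Sym2 (Fin n))) :=
  {F | F ⊆ Kedges n ∧ ∀ v : Fin n, ∃! e, e ∈ F ∧ v ∈ e}

/-!
Lower bound: all perfect matchings have the same size `n / 2`, and none arises from another by
exchanging a single edge.  So after `n / 2 - 1` rounds, for any two edges Waiter offers, Client can
choose one that does not complete a perfect matching.

Upper bound: Waiter repeatedly offers two edges `cp`, `cw` at an unmatched vertex `c`, both going to
unmatched vertices, so that Client builds a matching.  This keeps every matched edge `ab` usable in
an augmenting path `u a b v` for any two unmatched vertices `u`, `v`.  Once only `u` and `v` are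
unmatched, Waiter offers `ua` and `ua'` for two matched edges `ab` and `a'b'`; if Client takes `ua`,
Waiter offers `vb` and `uv`, and either choice completes a perfect matching.
-/

section Game

variable {X : Type*} [DecidableEq X] {board : Finset X} {F : Set (Finset X)} {b m t : ℕ}
  {Cl W : Finset X}

/-- Waiter's goal in the game with winning family `F`: Client owns all of some winning set.
Waiter's own elements `_W` are irrelevant. -/
abbrev ContainsWinningSet (F : Set (Finset X)) (Cl _W : Finset X) : Prop :=
  ∃ A ∈ F, A ⊆ Cl

/-- No member of `F` is turned into another one by exchanging a single element. -/
def NoSingleExchange (F : Set (Finset X)) : Prop :=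
  ∀ ⦃S : Finset X⦄ ⦃x y : X⦄, x ∉ S → y ∉ S → insert x S ∈ F → insert y S ∈ F → x = y

theorem WaiterWins.of_offer_pair {win : Finset X → Finset X → Prop} {x y : X} (hxy : x ≠ y)
    (hx : x ∈ board \ (Cl ∪ W)) (hy : y ∈ board \ (Cl ∪ W))
    (hwin_x : WaiterWins board 1 win t (insert x Cl) (insert y W))
    (hwin_y : WaiterWins board 1 win t (insert y Cl) (insert x W)) :
    WaiterWins board 1 win (t + 1) Cl W := by
  have hsub : {x, y} ⊆ board \ (Cl ∪ W) := insert_subset hx (singleton_subset_iff.2 hy)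
  have hcard := card_le_card hsub
  rw [card_pair hxy] at hcard
  refine Or.inr ⟨{x, y}, insert_nonempty _ _, hsub, ?_, ?_⟩
  · rw [card_pair hxy]
    omega
  · simp only [forall_mem_insert, mem_singleton, forall_eq]
    constructor
    · rwa [erase_insert (by simpa using hxy), union_singleton]
    · rwa [pair_comm, erase_insert (by simpa using hxy.symm), union_singleton]

theorem NoSingleExchange.exists_safe_choice (hF : NoSingleExchange F)
    (hcard : ∀ A ∈ F, m ≤ #A) (hCl : #Cl < m) {O : Finset X} (hO : 1 < #O)
    (hdisj : Disjoint O Cl) : ∃ z ∈ O, ∀ A ∈ F, ¬ A ⊆ insert z Cl := by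
  by_contra! hall
  have hmem : ∀ z ∈ O, insert z Cl ∈ F := by
    intro z hz
    obtain ⟨A, hA, hsub⟩ := hall z hz
    have hle : #(insert z Cl) ≤ #A :=
      (card_insert_le z Cl).trans (hCl.trans_le (hcard A hA))
    rwa [← eq_of_subset_of_card_le hsub hle]
  obtain ⟨x, hx, y, hy, hxy⟩ := one_lt_card.1 hO
  exact hxy <| hF (disjoint_left.1 hdisj hx) (disjoint_left.1 hdisj hy) (hmem x hx) (hmem y hy)

theorem NoSingleExchange.not_waiterWins (hF : NoSingleExchange F) (hb : b ≠ 0)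
    (hcard : ∀ A ∈ F, m ≤ #A) (hboard : (b + 1) * m ≤ #board) (hround : #Cl + t ≤ m)
    (hclaimed : #(Cl ∪ W) ≤ (b + 1) * #Cl) (hCl : ∀ A ∈ F, ¬ A ⊆ Cl) :
    ¬ WaiterWins board b (ContainsWinningSet F) t Cl W := by
  induction t generalizing Cl W with
  | zero => exact fun ⟨A, hA, hsub⟩ => hCl A hA hsub
  | succ t ih =>
    rintro (hnow | ⟨O, -, hO, hOcard, hnext⟩)
    · obtain ⟨A, hA, hsub⟩ := hnow
      exact hCl A hA hsub
    have hle : (b + 1) * (#Cl + 1) ≤ (b + 1) * m := Nat.mul_le_mul_left _ (by omega)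
    have hfree := le_card_sdiff (Cl ∪ W) board
    have htwo : 1 < #O := by
      rw [mul_add_one] at hle
      omega
    have hdisj : Disjoint O (Cl ∪ W) := disjoint_of_subset_left hO sdiff_disjoint
    obtain ⟨z, hz, hsafe⟩ := hF.exists_safe_choice hcard (by omega) htwo
      (disjoint_union_right.1 hdisj).1
    have hzCl : #(insert z Cl) = #Cl + 1 :=
      card_insert_of_notMem (disjoint_left.1 (disjoint_union_right.1 hdisj).1 hz)
    refine ih (by omega) ?_ hsafe (hnext z hz)
    calc #(insert z Cl ∪ (W ∪ O.erase z))
        ≤ #((Cl ∪ W) ∪ O) := card_le_card (by grind)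
      _ ≤ #(Cl ∪ W) + #O := card_union_le _ _
      _ ≤ (b + 1) * #Cl + (b + 1) := by omega
      _ = (b + 1) * #(insert z Cl) := by rw [hzCl, mul_add_one]

theorem NoSingleExchange.lt_tauWC (hF : NoSingleExchange F) (hb : b ≠ 0) (hm : m ≠ 0)
    (hcard : ∀ A ∈ F, m ≤ #A) (hboard : (b + 1) * m ≤ #board)
    (hwin : WaiterWins board b (ContainsWinningSet F) t ∅ ∅) : m < tauWC board F b := by
  have htau : WaiterWins board b (ContainsWinningSet F) (tauWC board F b) ∅ ∅ :=
    Nat.sInf_mem (s := {t | WaiterWins board b (ContainsWinningSet F) t ∅ ∅}) ⟨t, hwin⟩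
  by_contra! hle
  refine hF.not_waiterWins hb hcard hboard (by simpa using hle) (by simp) ?_ htau
  intro A hA hsub
  have hmA := hcard A hA
  rw [subset_empty.1 hsub, card_empty] at hmA
  omega

end Game

section Matching

variable {V : Type*} {M : Finset (Sym2 V)} {U : Finset V} {u v a b : V} {e f : Sym2 V}

/-- `M` is a matching whose unmatched vertices are exactly those of `U`; for `U = ∅` it is a perfect
matching. -/
structure IsMatchingMissing (M : Finset (Sym2 V)) (U : Finset V) : Prop where
  not_isDiag : ∀ e ∈ M, ¬ e.IsDiag
  existsUnique : ∀ v ∉ U, ∃! e, e ∈ M ∧ v ∈ e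
  notMem_edge : ∀ v ∈ U, ∀ e ∈ M, v ∉ e

namespace IsMatchingMissing

theorem notMem_missing_of_mem (h : IsMatchingMissing M U) (he : e ∈ M) (hv : v ∈ e) : v ∉ U :=
  fun hvU => h.notMem_edge v hvU e he hv

theorem mk_notMem (h : IsMatchingMissing M U) (hu : u ∈ U) : s(u, v) ∉ M :=
  fun he => h.notMem_edge u hu _ he (Sym2.mem_mk_left u v)

theorem eq_of_mem (h : IsMatchingMissing M U) (he : e ∈ M) (hf : f ∈ M) (hve : v ∈ e)
    (hvf : v ∈ f) : e = f :=
  (h.existsUnique v (h.notMem_missing_of_mem he hve)).unique ⟨he, hve⟩ ⟨hf, hvf⟩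

theorem two_mul_card_add_card [Fintype V] (h : IsMatchingMissing M U) :
    2 * #M + #U = Fintype.card V := by
  classical
  have hedge : ∀ e ∈ M, #(bipartiteAbove (fun e v => v ∈ e) Uᶜ e) = 2 := by
    intro e he
    rw [← Sym2.card_toFinset_of_not_isDiag e (h.not_isDiag e he)]
    congr 1
    ext v
    simpa [bipartiteAbove] using h.notMem_missing_of_mem he
  have hvertex : ∀ v ∈ Uᶜ, #(bipartiteBelow (fun e v => v ∈ e) M v) = 1 := by
    intro v hv
    obtain ⟨e, he, hunique⟩ := h.existsUnique v (mem_compl.1 hv)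
    refine card_eq_one.2 ⟨e, ?_⟩
    ext f
    simpa [bipartiteBelow] using ⟨fun hf => hunique f hf, fun hf => hf ▸ he⟩
  have hcount := card_mul_eq_card_mul _ hedge hvertex
  have hcompl := card_add_card_compl U
  omega

variable [DecidableEq V]

theorem eq_of_insert {x y : Sym2 V} {S : Finset (Sym2 V)} (hxS : x ∉ S) (hyS : y ∉ S)
    (hx : IsMatchingMissing (insert x S) U) (hy : IsMatchingMissing (insert y S) U) : x = y := by
  have hsub : ∀ {x y : Sym2 V}, x ∉ S → IsMatchingMissing (insert x S) U →
      IsMatchingMissing (insert y S) U → ∀ v ∈ x, v ∈ y := by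
    intro x y hxS hx hy v hv
    obtain ⟨e, ⟨he, hve⟩, -⟩ :=
      hy.existsUnique v (hx.notMem_missing_of_mem (mem_insert_self x S) hv)
    rcases mem_insert.1 he with rfl | heS
    · exact hve
    · have hxe : x = e := hx.eq_of_mem (mem_insert_self x S) (mem_insert_of_mem heS) hv hve
      exact absurd (hxe ▸ heS) hxS
  exact Sym2.ext fun v => ⟨hsub hxS hx hy v, hsub hyS hy hx v⟩

theorem insert_mk (h : IsMatchingMissing M U) (hu : u ∈ U) (hv : v ∈ U) (huv : u ≠ v) :
    IsMatchingMissing (insert s(u, v) M) (U \ {u, v}) where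
  not_isDiag := forall_mem_insert _ _ _ |>.2 ⟨huv, h.not_isDiag⟩
  existsUnique w hw := by
    by_cases hwU : w ∈ U
    · have hwuv : w ∈ s(u, v) := by simpa [hwU, or_iff_not_imp_left] using hw
      refine ⟨s(u, v), ⟨mem_insert_self _ _, hwuv⟩, ?_⟩
      rintro f ⟨hf, hwf⟩
      exact (mem_insert.1 hf).resolve_right fun hfM => h.notMem_edge w hwU f hfM hwf
    · obtain ⟨e, ⟨he, hwe⟩, hunique⟩ := h.existsUnique w hwU
      refine ⟨e, ⟨mem_insert_of_mem he, hwe⟩, ?_⟩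
      rintro f ⟨hf, hwf⟩
      rcases mem_insert.1 hf with rfl | hfM
      · rcases Sym2.mem_iff.1 hwf with rfl | rfl <;> contradiction
      · exact hunique f ⟨hfM, hwf⟩
  notMem_edge w hw := by
    simp only [mem_sdiff, mem_insert, mem_singleton] at hw
    refine forall_mem_insert _ _ _ |>.2 ⟨?_, h.notMem_edge w hw.1⟩
    exact fun hwuv => hw.2 (Sym2.mem_iff.1 hwuv)

theorem erase_mk (h : IsMatchingMissing M U) (hab : s(a, b) ∈ M) :
    IsMatchingMissing (M.erase s(a, b)) (U ∪ {a, b}) where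
  not_isDiag e he := h.not_isDiag e (mem_of_mem_erase he)
  existsUnique w hw := by
    simp only [mem_union, mem_insert, mem_singleton, not_or] at hw
    obtain ⟨e, ⟨he, hwe⟩, hunique⟩ := h.existsUnique w hw.1
    refine ⟨e, ⟨mem_erase.2 ⟨?_, he⟩, hwe⟩, fun f hf => hunique f ⟨mem_of_mem_erase hf.1, hf.2⟩⟩
    rintro rfl
    exact (Sym2.mem_iff.1 hwe).elim hw.2.1 hw.2.2
  notMem_edge w hw e he hwe := by
    obtain ⟨hne, heM⟩ := mem_erase.1 he
    rcases mem_union.1 hw with hwU | hwab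
    · exact h.notMem_edge w hwU e heM hwe
    · exact hne (h.eq_of_mem heM hab hwe (by simpa using hwab))

theorem augment (h : IsMatchingMissing M U) (hu : u ∈ U) (hv : v ∈ U) (huv : u ≠ v)
    (hab : s(a, b) ∈ M) :
    IsMatchingMissing (insert s(v, b) (insert s(u, a) (M.erase s(a, b)))) (U \ {u, v}) := by
  have ha : a ∉ U := h.notMem_missing_of_mem hab (Sym2.mem_mk_left a b)
  have hb : b ∉ U := h.notMem_missing_of_mem hab (Sym2.mem_mk_right a b)
  have hne : a ≠ b := h.not_isDiag _ hab
  have hua : IsMatchingMissing (insert s(u, a) (M.erase s(a, b))) ((U ∪ {a, b}) \ {u, a}) :=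
    (h.erase_mk hab).insert_mk (by grind) (by grind) (by grind)
  have hmissing : ((U ∪ {a, b}) \ {u, a}) \ {v, b} = U \ {u, v} := by grind
  rw [← hmissing]
  exact hua.insert_mk (by grind) (by grind) (by grind)

end IsMatchingMissing

theorem notMem_insert_of_mem [DecidableEq V] (he : e ∉ M) (hvf : v ∈ f) (hve : v ∉ e) :
    e ∉ insert f M :=
  fun h => (mem_insert.1 h).elim (fun hef => hve (hef ▸ hvf)) he

/-- The invariant of Waiter's strategy.  Client's edges `C` form a matching missing `U`, Waiter has
no edge inside `U`, and `augment` says that any two unmatched vertices `u`, `v` and any edge of `C`,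
suitably oriented as `ab`, form a path `u a b v` whose edges `ua` and `vb` Waiter does not own. -/
structure IsAugmentable (C W : Finset (Sym2 V)) (U : Finset V) : Prop where
  isMatchingMissing : IsMatchingMissing C U
  notMem_waiter : ∀ u ∈ U, ∀ v ∈ U, s(u, v) ∉ W
  augment : ∀ e ∈ C, ∀ u ∈ U, ∀ v ∈ U, u ≠ v → ∃ a b, e = s(a, b) ∧ s(u, a) ∉ W ∧ s(v, b) ∉ W

theorem isAugmentable_empty [Fintype V] : IsAugmentable (∅ : Finset (Sym2 V)) ∅ univ where
  isMatchingMissing := ⟨by simp, by simp, by simp⟩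
  notMem_waiter := by simp
  augment := by simp

theorem IsAugmentable.insert_mk [DecidableEq V] {C W : Finset (Sym2 V)} {c p w : V}
    (h : IsAugmentable C W U) (hc : c ∈ U) (hp : p ∈ U) (hcp : c ≠ p) (hcw : c ≠ w) :
    IsAugmentable (insert s(c, p) C) (insert s(c, w) W) (U \ {c, p}) where
  isMatchingMissing := h.isMatchingMissing.insert_mk hc hp hcp
  notMem_waiter u hu v hv := by
    simp only [mem_sdiff, mem_insert, mem_singleton] at hu hv
    exact notMem_insert_of_mem (h.notMem_waiter u hu.1 v hv.1) (Sym2.mem_mk_left c w) (by grind)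
  augment e he u hu v hv huv := by
    simp only [mem_sdiff, mem_insert, mem_singleton, not_or] at hu hv
    have hc_mem : c ∈ s(c, w) := Sym2.mem_mk_left c w
    have hw_mem : w ∈ s(c, w) := Sym2.mem_mk_right c w
    rcases mem_insert.1 he with rfl | heC
    -- Waiter's only edge between `cp` and `U` is `cw`, so `c` is joined to whichever of `u`, `v`
    -- differs from `w`.
    · by_cases huw : u = w
      · exact ⟨p, c, Sym2.eq_swap,
          notMem_insert_of_mem (h.notMem_waiter u hu.1 p hp) hc_mem (by grind),
          notMem_insert_of_mem (h.notMem_waiter v hv.1 c hc) hw_mem (by grind)⟩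
      · exact ⟨c, p, rfl,
          notMem_insert_of_mem (h.notMem_waiter u hu.1 c hc) hw_mem (by grind),
          notMem_insert_of_mem (h.notMem_waiter v hv.1 p hp) hc_mem (by grind)⟩
    · obtain ⟨a, b, rfl, hua, hvb⟩ := h.augment e heC u hu.1 v hv.1 huv
      have hcab : c ∉ s(a, b) := h.isMatchingMissing.notMem_edge c hc _ heC
      exact ⟨a, b, rfl, notMem_insert_of_mem hua hc_mem (by grind),
        notMem_insert_of_mem hvb hc_mem (by grind)⟩

end Matching

section CompleteGraph

variable {n : ℕ} {C W : Finset (Sym2 (Fin n))} {U : Finset (Fin n)}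

theorem mk_mem_Kedges_sdiff {u v : Fin n} (huv : u ≠ v) (hC : s(u, v) ∉ C) (hW : s(u, v) ∉ W) :
    s(u, v) ∈ Kedges n \ (C ∪ W) := by
  simp [Kedges, huv, hC, hW]

theorem card_Kedges (n : ℕ) : #(Kedges n) = n.choose 2 := by
  simpa [Kedges, Fintype.card_subtype] using Sym2.card_subtype_not_diag (α := Fin n)

theorem mem_PMfamily_iff : C ∈ PMfamily n ↔ IsMatchingMissing C ∅ := by
  constructor
  · rintro ⟨hsub, hcover⟩
    exact ⟨fun e he => (mem_filter.1 (hsub he)).2, fun v _ => hcover v, by simp⟩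
  · intro h
    exact ⟨fun e he => mem_filter.2 ⟨mem_univ e, h.not_isDiag e he⟩,
      fun v => h.existsUnique v (notMem_empty v)⟩

theorem two_mul_card_of_mem_PMfamily (hC : C ∈ PMfamily n) : 2 * #C = n := by
  simpa using (mem_PMfamily_iff.1 hC).two_mul_card_add_card

theorem noSingleExchange_PMfamily : NoSingleExchange (PMfamily n) :=
  fun _ _ _ hxS hyS hx hy =>
    IsMatchingMissing.eq_of_insert hxS hyS (mem_PMfamily_iff.1 hx) (mem_PMfamily_iff.1 hy)

theorem waiterWins_last_round {u v a b : Fin n} (h : IsMatchingMissing C {u, v}) (huv : u ≠ v)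
    (hab : s(a, b) ∈ C) (hvb : s(v, b) ∉ W) (huvW : s(u, v) ∉ W) :
    WaiterWins (Kedges n) 1 (ContainsWinningSet (PMfamily n)) 1 (insert s(u, a) C) W := by
  have ha : a ≠ u ∧ a ≠ v := by simpa using h.notMem_missing_of_mem hab (Sym2.mem_mk_left a b)
  have hb : b ≠ u ∧ b ≠ v := by simpa using h.notMem_missing_of_mem hab (Sym2.mem_mk_right a b)
  have hvb_free : s(v, b) ∈ Kedges n \ (insert s(u, a) C ∪ W) :=
    mk_mem_Kedges_sdiff hb.2.symm
      (notMem_insert_of_mem (h.mk_notMem (by simp)) (Sym2.mem_mk_left u a) (by grind)) hvb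
  have huv_free : s(u, v) ∈ Kedges n \ (insert s(u, a) C ∪ W) :=
    mk_mem_Kedges_sdiff huv
      (notMem_insert_of_mem (h.mk_notMem (by simp)) (Sym2.mem_mk_right u a) (by grind)) huvW
  refine .of_offer_pair (by grind) hvb_free huv_free ?_ ?_
  · have hpm := h.augment (by simp) (by simp) huv hab
    rw [sdiff_self] at hpm
    exact ⟨_, mem_PMfamily_iff.2 hpm,
      insert_subset_insert _ (insert_subset_insert _ (erase_subset _ _))⟩
  · have hpm := h.insert_mk (by simp) (by simp) huv
    rw [sdiff_self] at hpm
    exact ⟨_, mem_PMfamily_iff.2 hpm, insert_subset_insert _ (subset_insert _ _)⟩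

theorem IsAugmentable.waiterWins_two_rounds {u v : Fin n} (hn : 6 ≤ n) (huv : u ≠ v)
    (h : IsAugmentable C W {u, v}) :
    WaiterWins (Kedges n) 1 (ContainsWinningSet (PMfamily n)) 2 C W := by
  have hM := h.isMatchingMissing
  have hu : u ∈ ({u, v} : Finset (Fin n)) := by simp
  have hv : v ∈ ({u, v} : Finset (Fin n)) := by simp
  have hcard : 1 < #C := by
    have := hM.two_mul_card_add_card
    rw [card_pair huv, Fintype.card_fin] at this
    omega
  obtain ⟨e, he, e', he', hne⟩ := one_lt_card.1 hcard
  obtain ⟨a, b, rfl, hua, hvb⟩ := h.augment e he u hu v hv huv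
  obtain ⟨a', b', rfl, hua', hvb'⟩ := h.augment e' he' u hu v hv huv
  have haa' : a ≠ a' := by
    rintro rfl
    exact hne (hM.eq_of_mem he he' (Sym2.mem_mk_left a b) (Sym2.mem_mk_left a b'))
  have ha : a ≠ u ∧ a ≠ v := by simpa using hM.notMem_missing_of_mem he (Sym2.mem_mk_left a b)
  have hb := hM.notMem_missing_of_mem he (Sym2.mem_mk_right a b)
  have ha' : a' ≠ u ∧ a' ≠ v := by
    simpa using hM.notMem_missing_of_mem he' (Sym2.mem_mk_left a' b')
  have hb' := hM.notMem_missing_of_mem he' (Sym2.mem_mk_right a' b')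
  have huvW := h.notMem_waiter u hu v hv
  refine .of_offer_pair (mt Sym2.congr_right.1 haa')
    (mk_mem_Kedges_sdiff ha.1.symm (hM.mk_notMem hu) hua)
    (mk_mem_Kedges_sdiff ha'.1.symm (hM.mk_notMem hu) hua') ?_ ?_
  · exact waiterWins_last_round hM huv he
      (notMem_insert_of_mem hvb (Sym2.mem_mk_left u a') (by grind))
      (notMem_insert_of_mem huvW (Sym2.mem_mk_right u a') (by grind))
  · exact waiterWins_last_round hM huv he'
      (notMem_insert_of_mem hvb' (Sym2.mem_mk_left u a) (by grind))
      (notMem_insert_of_mem huvW (Sym2.mem_mk_right u a) (by grind))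

theorem IsAugmentable.waiterWins (hn : 6 ≤ n) {k : ℕ} (h : IsAugmentable C W U)
    (hU : #U = 2 * k + 2) :
    WaiterWins (Kedges n) 1 (ContainsWinningSet (PMfamily n)) (k + 2) C W := by
  induction k generalizing C W U with
  | zero =>
    obtain ⟨u, v, huv, rfl⟩ := card_eq_two.1 hU
    exact h.waiterWins_two_rounds hn huv
  | succ k ih =>
    obtain ⟨c, p, w, hc, hp, hw, hcp, hcw, hpw⟩ :=
      two_lt_card_iff.1 (show 2 < #U by omega)
    have hrest : ∀ q ∈ U, c ≠ q → #(U \ {c, q}) = 2 * k + 2 := by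
      intro q hq hcq
      rw [card_sdiff_of_subset (by grind), card_pair hcq]
      omega
    refine .of_offer_pair (mt Sym2.congr_right.1 hpw)
      (mk_mem_Kedges_sdiff hcp (h.isMatchingMissing.mk_notMem hc) (h.notMem_waiter c hc p hp))
      (mk_mem_Kedges_sdiff hcw (h.isMatchingMissing.mk_notMem hc) (h.notMem_waiter c hc w hw)) ?_ ?_
    · exact ih (h.insert_mk hc hp hcp hcw) (hrest p hp hcp)
    · exact ih (h.insert_mk hc hw hcw hcp) (hrest w hw hcw)

theorem waiterWins_PMfamily (hn : 6 ≤ n) (heven : Even n) :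
    WaiterWins (Kedges n) 1 (ContainsWinningSet (PMfamily n)) (n / 2 + 1) ∅ ∅ := by
  obtain ⟨k, hk⟩ : ∃ k, n / 2 = k + 1 := ⟨n / 2 - 1, by omega⟩
  rw [hk]
  refine isAugmentable_empty.waiterWins hn ?_
  rw [card_univ, Fintype.card_fin]
  have := Nat.two_mul_div_two_of_even heven
  omega

theorem le_card_Kedges (hn : 3 ≤ n) : n ≤ #(Kedges n) := by
  rw [card_Kedges, Nat.choose_two_right, Nat.le_div_iff_mul_le two_pos]
  exact Nat.mul_le_mul_left n (by omega)

theorem WC_perfect_matching_unbiased_general (hn : 6 ≤ n) (heven : Even n) :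
    tauWC (Kedges n) (PMfamily n) 1 = n / 2 + 1 := by
  have hwin := waiterWins_PMfamily hn heven
  refine le_antisymm (Nat.sInf_le hwin) (Nat.succ_le_of_lt ?_)
  have hcard : ∀ A ∈ PMfamily n, n / 2 ≤ #A := fun A hA => by
    have := two_mul_card_of_mem_PMfamily hA
    omega
  have hboard : (1 + 1) * (n / 2) ≤ #(Kedges n) :=
    (Nat.mul_div_le n 2).trans (le_card_Kedges (by omega))
  exact noSingleExchange_PMfamily.lt_tauWC one_ne_zero (by omega) hcard hboard hwin

end CompleteGraph

/-- For every large enough even integer `n`, in the unbiased Waiter-Client game on the edge set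
of `K_n` whose winning sets are the perfect matchings of `K_n`, the minimum number of rounds
within which Waiter can force a win is exactly `n/2 + 1`. -/
theorem WC_perfect_matching_unbiased :
    ∃ n₀ : ℕ, ∀ n : ℕ, n₀ ≤ n → Even n →
      tauWC (Kedges n) (PMfamily n) 1 = n / 2 + 1 :=
  ⟨6, fun _ hn heven => WC_perfect_matching_unbiased_general hn heven⟩
end

section
/- There exist constants δ > 0 and C > 0 such that for every large enough even integer n and every positive integer b ≤ δn, in the b-biased Waiter-Client game on the edge set of K_n whose winning sets are the perfect matchings of K_n, Waiter has a strategy to win within n/2 + Cb rounds; that is, τ_WC(PM_n, b) ≤ n/2 + Cb. -/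
open Finset

/-!
Offering all edges between a vertex `x` and `b + 1` others forces one edge at `x`, so at the cost of
`O(b)` rounds Waiter gets `O(b)` matched pairs, kept as a reserve. The remaining vertices are
grown into *blobs*: odd vertex sets with several tips, such that the deletion of any one tip leaves
a set that Client has already matched. An edge between tips of two different blobs thus matches
both blobs completely. If there are `m` blobs with `a` tips each and `b < (m - 1) * a ^ 2`, then
offering edges between the tips of one blob and those of all the others completes two blobs in a
single round, without loss. Otherwise `m ≤ b / a ^ 2 + 1`, and `m` rounds give every blob a new tip,
by joining it to a reserve pair. Only the latter rounds are wasted, and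
`∑ a ≤ √b, (b / a ^ 2 + 1) ≤ 3 * b`.
-/

namespace WaiterClient

section Matchings

variable {V : Type*} {E E' : Finset (Sym2 V)} {S T : Finset V} {f g : V → V}

/-- `f` exchanges the ends of the edges of a perfect matching of `S`, all of them in `E`. A
matching is encoded by this fixed-point-free involution of `S`; outside `S` the values of `f` are
arbitrary. -/
structure IsMatchingOn (E : Finset (Sym2 V)) (S : Finset V) (f : V → V) : Prop where
  mapsTo : ∀ v ∈ S, f v ∈ S
  ne : ∀ v ∈ S, f v ≠ v
  involutive : ∀ v ∈ S, f (f v) = v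
  edge_mem : ∀ v ∈ S, s(v, f v) ∈ E

lemma IsMatchingOn.mono (h : IsMatchingOn E S f) (hE : E ⊆ E') : IsMatchingOn E' S f :=
  ⟨h.mapsTo, h.ne, h.involutive, fun v hv => hE (h.edge_mem v hv)⟩

lemma IsMatchingOn.restrict (h : IsMatchingOn E S f) (hTS : T ⊆ S)
    (hT : ∀ v ∈ T, f v ∈ T) : IsMatchingOn E T f :=
  ⟨hT, fun v hv => h.ne v (hTS hv), fun v hv => h.involutive v (hTS hv),
    fun v hv => h.edge_mem v (hTS hv)⟩

variable [DecidableEq V]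

lemma IsMatchingOn.piecewise (hf : IsMatchingOn E S f) (hg : IsMatchingOn E T g)
    (hST : Disjoint S T) : IsMatchingOn E (S ∪ T) (S.piecewise f g) := by
  rw [disjoint_left] at hST
  obtain ⟨_, _, _, _⟩ := hf
  obtain ⟨_, _, _, _⟩ := hg
  constructor <;> intro v hv <;> by_cases hvS : v ∈ S <;> grind [Finset.piecewise]

lemma isMatchingOn_swap {v w : V} (hvw : v ≠ w) (he : s(v, w) ∈ E) :
    IsMatchingOn E {v, w} (Equiv.swap v w) := by
  have he' : s(w, v) ∈ E := Sym2.eq_swap ▸ he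
  constructor <;> simp [hvw, hvw.symm, he, he']

lemma exists_isMatchingOn_union_image {X : Finset V} {π : V → V}
    (hπ : Set.InjOn π X) (hX : Disjoint X (X.image π)) (hE : ∀ x ∈ X, s(x, π x) ∈ E) :
    ∃ f, IsMatchingOn E (X ∪ X.image π) f ∧ ∀ x ∈ X, f x = π x := by
  rcases isEmpty_or_nonempty V with hV | hV
  · exact ⟨π, ⟨hV.elim, hV.elim, hV.elim, hV.elim⟩, hV.elim⟩
  have hinv : ∀ x ∈ X, Function.invFunOn π X (π x) = x := fun x hx =>
    hπ.leftInvOn_invFunOn (mem_coe.2 hx)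
  rw [disjoint_left] at hX
  refine ⟨X.piecewise π (Function.invFunOn π X), ?_, fun x hx => piecewise_eq_of_mem _ _ _ hx⟩
  constructor <;> intro v hv <;> by_cases hvX : v ∈ X <;> grind [Finset.piecewise, Sym2.eq_swap]

lemma IsMatchingOn.exists_mem_PMfamily {n : ℕ} {E : Finset (Sym2 (Fin n))} {f : Fin n → Fin n}
    (h : IsMatchingOn E univ f) : ∃ F ∈ PMfamily n, F ⊆ E := by
  refine ⟨univ.image fun v => s(v, f v), ⟨?_, fun v => ?_⟩, ?_⟩
  · intro e he
    obtain ⟨v, -, rfl⟩ := mem_image.1 he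
    simpa [Kedges] using (h.ne v (mem_univ v)).symm
  · refine ⟨s(v, f v), ⟨mem_image_of_mem _ (mem_univ v), Sym2.mem_mk_left _ _⟩, ?_⟩
    rintro e ⟨he, hve⟩
    obtain ⟨u, -, rfl⟩ := mem_image.1 he
    rcases Sym2.mem_iff.1 hve with rfl | rfl
    · rfl
    · rw [h.involutive u (mem_univ u), Sym2.eq_swap]
  · intro e he
    obtain ⟨v, -, rfl⟩ := mem_image.1 he
    exact h.edge_mem v (mem_univ v)

end Matchings

section Blobs

variable {V : Type*} [DecidableEq V]

/-- A set `body` of vertices with the distinguished `tips`, of which `head` is the one at which the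
blob will be extended next. -/
structure Blob (V : Type*) where
  body : Finset V
  tips : Finset V
  head : V

/-- The blob is tip-critical in `E`: the deletion of any one tip leaves a set of vertices with a
perfect matching contained in `E`. Joining the tips of two such blobs therefore matches both. -/
structure Blob.IsCritical (E : Finset (Sym2 V)) (B : Blob V) : Prop where
  head_mem : B.head ∈ B.tips
  tips_subset : B.tips ⊆ B.body
  exists_isMatchingOn : ∀ p ∈ B.tips, ∃ f, IsMatchingOn E (B.body.erase p) f

/-- The blob extended by the path from its head through `x` to `q`; its new tip and head is `q`. -/
def Blob.extend (B : Blob V) (x q : V) : Blob V where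
  body := B.body ∪ {x, q}
  tips := insert q B.tips
  head := q

/-- The blob consisting of the vertex `v` only. -/
def Blob.single (v : V) : Blob V := ⟨{v}, {v}, v⟩

namespace Blob.IsCritical

variable {E E' : Finset (Sym2 V)} {B B' : Blob V}

lemma mono (h : B.IsCritical E) (hE : E ⊆ E') : B.IsCritical E' :=
  ⟨h.head_mem, h.tips_subset, fun p hp => (h.exists_isMatchingOn p hp).imp fun _ hf => hf.mono hE⟩

lemma head_mem_body (h : B.IsCritical E) : B.head ∈ B.body := h.tips_subset h.head_mem

lemma single (v : V) : (Blob.single v).IsCritical E :=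
  ⟨by simp [Blob.single], by simp [Blob.single],
    fun p hp => ⟨id, by constructor <;> simp_all [Blob.single]⟩⟩

lemma extend (h : B.IsCritical E) {x q : V} (hx : x ∉ B.body) (hq : q ∉ B.body) (hxq : x ≠ q)
    (hBx : s(B.head, x) ∈ E) (hxq' : s(x, q) ∈ E) : (B.extend x q).IsCritical E := by
  have hhead := h.head_mem_body
  refine ⟨by simp [Blob.extend], ?_, fun p hp => ?_⟩
  · grind [Blob.extend, h.tips_subset]
  rcases mem_insert.1 hp with rfl | hp
  · obtain ⟨f, hf⟩ := h.exists_isMatchingOn _ h.head_mem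
    have hg := isMatchingOn_swap (by grind : B.head ≠ x) hBx
    have hdisj : Disjoint (B.body.erase B.head) {B.head, x} := by
      simp only [disjoint_left]; grind
    have hbody : (B.extend x p).body.erase p = B.body.erase B.head ∪ {B.head, x} := by
      ext; simp only [Blob.extend]; grind
    exact ⟨_, hbody ▸ hf.piecewise hg hdisj⟩
  · obtain ⟨f, hf⟩ := h.exists_isMatchingOn p hp
    have hpB := h.tips_subset hp
    have hdisj : Disjoint (B.body.erase p) {x, q} := by
      simp only [disjoint_left]; grind
    have hbody : (B.extend x q).body.erase p = B.body.erase p ∪ {x, q} := by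
      ext; simp only [Blob.extend]; grind
    exact ⟨_, hbody ▸ hf.piecewise (isMatchingOn_swap hxq hxq') hdisj⟩

lemma exists_isMatchingOn_union (h : B.IsCritical E) (h' : B'.IsCritical E)
    (hBB' : Disjoint B.body B'.body) {p q : V} (hp : p ∈ B.tips) (hq : q ∈ B'.tips)
    (hpq : s(p, q) ∈ E) : ∃ f, IsMatchingOn E (B.body ∪ B'.body) f := by
  obtain ⟨f, hf⟩ := h.exists_isMatchingOn p hp
  obtain ⟨g, hg⟩ := h'.exists_isMatchingOn q hq
  have hpB := h.tips_subset hp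
  have hqB' := h'.tips_subset hq
  rw [disjoint_left] at hBB'
  have hfg := hf.piecewise hg (by simp only [disjoint_left]; grind)
  have hdisj : Disjoint (B.body.erase p ∪ B'.body.erase q) {p, q} := by
    simp only [disjoint_left]; grind
  have hbody : B.body ∪ B'.body = B.body.erase p ∪ B'.body.erase q ∪ {p, q} := by
    ext; grind
  exact ⟨_, hbody ▸ hfg.piecewise (isMatchingOn_swap (by grind) hpq) hdisj⟩

end Blob.IsCritical

end Blobs

section Game

/-- Waiter can force `win` within `t` further rounds whenever Client owns `Cl` and all elements
claimed so far, by either player, belong to `D`. Bounding Waiter's elements by `D` only makes it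
unnecessary to follow which of the offered elements were really taken. -/
def ForcesWin {X : Type*} [DecidableEq X] (board : Finset X) (b : ℕ)
    (win : Finset X → Finset X → Prop) (t : ℕ) (Cl D : Finset X) : Prop :=
  ∀ W, Cl ∪ W ⊆ D → WaiterWins board b win t Cl W

section Board

variable {X : Type*} [DecidableEq X] {board : Finset X} {b : ℕ}
  {win : Finset X → Finset X → Prop} {t t' : ℕ} {Cl W D D' : Finset X}

lemma waiterWins_succ (h : WaiterWins board b win t Cl W) :
    WaiterWins board b win (t + 1) Cl W := by
  induction t generalizing Cl W with
  | zero => exact Or.inl h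
  | succ t ih =>
    obtain h | ⟨O, hne, hO, hcard, hforce⟩ := h
    · exact Or.inl h
    · exact Or.inr ⟨O, hne, hO, hcard, fun x hx => ih (hforce x hx)⟩

lemma ForcesWin.mono (h : ForcesWin board b win t Cl D) (htt' : t ≤ t') :
    ForcesWin board b win t' Cl D := fun W hW =>
  Nat.le_induction (h W hW) (fun _ _ => waiterWins_succ) t' htt'

lemma ForcesWin.anti (h : ForcesWin board b win t Cl D) (hDD' : D' ⊆ D) :
    ForcesWin board b win t Cl D' := fun W hW => h W (hW.trans hDD')

lemma forcesWin_of_offer {S : Finset X} (hS : S ⊆ board) (hSD : Disjoint S D) (hcard : b < #S)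
    (h : ∀ e ∈ S, ForcesWin board b win t (insert e Cl) (D ∪ S)) :
    ForcesWin board b win (t + 1) Cl D := by
  intro W hW
  obtain ⟨O, hOS, hO⟩ := exists_subset_card_eq (Nat.succ_le_of_lt hcard)
  have hfree : O ⊆ board \ (Cl ∪ W) := fun e he =>
    mem_sdiff.2 ⟨hS (hOS he), fun heW => disjoint_left.1 hSD (hOS he) (hW heW)⟩
  refine Or.inr ⟨O, card_pos.1 (by omega), hfree, ?_, fun e he => h e (hOS he) _ ?_⟩
  · have := card_le_card hfree
    omega
  · grind

end Board

/-- The edges with one end in `X` and the other in `Y`. -/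
def crossEdges {V : Type*} [DecidableEq V] (X Y : Finset V) : Finset (Sym2 V) :=
  image₂ (fun x y => s(x, y)) X Y

section CrossEdges

variable {V : Type*} [DecidableEq V] {X X' Y Y' : Finset V}

lemma mk_mem_crossEdges {u v : V} :
    s(u, v) ∈ crossEdges X Y ↔ u ∈ X ∧ v ∈ Y ∨ v ∈ X ∧ u ∈ Y := by
  simp only [crossEdges, mem_image₂, Sym2.eq_iff]
  grind

lemma crossEdges_subset (hX : X ⊆ X') (hY : Y ⊆ Y') : crossEdges X Y ⊆ crossEdges X' Y' :=
  image₂_subset hX hY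

lemma card_crossEdges (h : Disjoint X Y) : #(crossEdges X Y) = #X * #Y := by
  refine card_image₂_iff.2 fun ⟨x, y⟩ hxy ⟨x', y'⟩ hxy' heq => ?_
  rw [disjoint_left] at h
  simp only [Set.mem_prod, mem_coe, Sym2.eq_iff] at hxy hxy' heq
  grind

lemma crossEdges_subset_Kedges {n : ℕ} {X Y : Finset (Fin n)} (h : Disjoint X Y) :
    crossEdges X Y ⊆ Kedges n := by
  refine image₂_subset_iff.2 fun x hx y hy => ?_
  simpa [Kedges] using disjoint_iff_ne.1 h x hx y hy

end CrossEdges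

variable {n b t : ℕ} {win : Finset (Sym2 (Fin n)) → Finset (Sym2 (Fin n)) → Prop}
  {Cl D : Finset (Sym2 (Fin n))}

lemma forcesWin_of_crossEdges {X Y : Finset (Fin n)} (hXY : Disjoint X Y) (hcard : b < #X * #Y)
    (hfree : ∀ x ∈ X, ∀ y ∈ Y, s(x, y) ∉ D)
    (h : ∀ x ∈ X, ∀ y ∈ Y,
      ForcesWin (Kedges n) b win t (insert s(x, y) Cl) (D ∪ crossEdges X Y)) :
    ForcesWin (Kedges n) b win (t + 1) Cl D := by
  refine forcesWin_of_offer (crossEdges_subset_Kedges hXY) ?_ (card_crossEdges hXY ▸ hcard) ?_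
  · exact disjoint_left.2 (forall_mem_image₂.2 hfree)
  · exact forall_mem_image₂.2 h

lemma forcesWin_of_injection {X Y : Finset (Fin n)} (hXY : Disjoint X Y) (hcard : #X + b ≤ #Y)
    (hfree : ∀ x ∈ X, ∀ y ∈ Y, s(x, y) ∉ D)
    (h : ∀ π : Fin n → Fin n, Set.InjOn π X → (∀ x ∈ X, π x ∈ Y) →
      ForcesWin (Kedges n) b win t (Cl ∪ X.image fun x => s(x, π x)) (D ∪ crossEdges X Y)) :
    ForcesWin (Kedges n) b win (t + #X) Cl D := by
  induction X using Finset.induction_on generalizing Cl D Y with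
  | empty => simpa [crossEdges] using h id (by simp) (by simp)
  | insert x X hx ih =>
    rw [disjoint_insert_left] at hXY
    rw [card_insert_of_notMem hx] at hcard ⊢
    refine forcesWin_of_crossEdges (X := {x}) (Y := Y) (by simpa using hXY.1) (by simp; omega)
      (by simpa using hfree x (mem_insert_self x X)) fun x' hx' y hy => ?_
    obtain rfl := mem_singleton.1 hx'
    refine ih (Y := Y.erase y) (hXY.2.mono_right (erase_subset y Y))
      (by rw [card_erase_of_mem hy]; omega) ?_ fun π hπ hπY => ?_
    · intro z hz w hw
      have hzw := hfree z (mem_insert_of_mem hz) w (mem_of_mem_erase hw)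
      have hzY := disjoint_left.1 hXY.2 hz
      rw [mem_union, mk_mem_crossEdges]
      grind
    have hπ' : ∀ z ∈ X, Function.update π x' y z = π z := fun z hz =>
      Function.update_of_ne (by grind) _ _
    have hwin := h (Function.update π x' y) ?_ ?_
    · rw [image_insert, Function.update_self, union_insert, ← insert_union,
        image_congr (g := fun z => s(z, π z)) fun z hz => by rw [hπ' z hz]] at hwin
      refine hwin.anti ?_
      rw [union_assoc]
      exact union_subset_union_right (union_subset (crossEdges_subset (by simp) subset_rfl)
        (crossEdges_subset (subset_insert _ _) (erase_subset y Y)))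
    · rw [coe_insert, Set.injOn_insert (by simpa using hx)]
      refine ⟨hπ.congr fun z hz => (hπ' z hz).symm, ?_⟩
      rintro ⟨z, hz, hzy⟩
      rw [hπ' z hz, Function.update_self] at hzy
      exact (mem_erase.1 (hπY z hz)).1 hzy
    · intro z hz
      rcases mem_insert.1 hz with rfl | hz
      · rwa [Function.update_self]
      · rw [hπ' z hz]
        exact mem_of_mem_erase (hπY z hz)

end Game

section BlobDecomposition

variable {ι V : Type*} [DecidableEq V]

/-- A splitting of the vertices into the bodies of critical blobs `B i`, `i ∈ J`, and a remainder
matched by Client. The blobs are to be extended through the vertices `x` of the pool `P`, each of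
which has its partner `mate x` outside the pool. -/
structure IsBlobDecomposition [Fintype V] (Cl : Finset (Sym2 V)) (J : Finset ι) (B : ι → Blob V)
    (mate : V → V) (P : Finset V) : Prop where
  critical : ∀ i ∈ J, (B i).IsCritical Cl
  disjoint_body : ∀ i ∈ J, ∀ j ∈ J, i ≠ j → Disjoint (B i).body (B j).body
  pool_subset : P ⊆ (J.biUnion fun i => (B i).body)ᶜ
  mate_notMem : ∀ x ∈ P, mate x ∉ P
  exists_isMatchingOn :
    ∃ f, IsMatchingOn Cl (J.biUnion fun i => (B i).body)ᶜ f ∧ ∀ x ∈ P, f x = mate x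

/-- The vertices at which offers between blobs take place: the tips of the blobs and the vertices
that can still become tips, namely the partners of the pool vertices. -/
def liveVertices (J : Finset ι) (B : ι → Blob V) (mate : V → V) (P : Finset V) : Finset V :=
  (J.biUnion fun i => (B i).tips) ∪ P.image mate

lemma liveVertices_extend_subset {J : Finset ι} {B : ι → Blob V} {mate : V → V} {P P' : Finset V}
    {ξ : ι → V} (hξ : ∀ i ∈ J, ξ i ∈ P) (hP' : P' ⊆ P) :
    liveVertices J (fun i => (B i).extend (ξ i) (mate (ξ i))) mate P' ⊆
      liveVertices J B mate P := by
  intro p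
  simp only [liveVertices, Blob.extend, mem_union, mem_biUnion, mem_insert, mem_image]
  grind

lemma mem_compl_biUnion_extend [Fintype V] {J : Finset ι} {B : ι → Blob V} {ξ η : ι → V}
    {x : V} :
    x ∈ (J.biUnion fun i => ((B i).extend (ξ i) (η i)).body)ᶜ ↔
      x ∈ (J.biUnion fun i => (B i).body)ᶜ ∧ ∀ i ∈ J, x ≠ ξ i ∧ x ≠ η i := by
  simp only [mem_compl, mem_biUnion, Blob.extend, mem_union, mem_insert, mem_singleton]
  grind

namespace IsBlobDecomposition

variable [Fintype V] {Cl : Finset (Sym2 V)} {J J' : Finset ι} {B : ι → Blob V} {mate : V → V}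
  {P P' : Finset V} {i j : ι} {x p : V}

lemma disjoint_tips (h : IsBlobDecomposition Cl J B mate P) (hi : i ∈ J) (hj : j ∈ J)
    (hij : i ≠ j) : Disjoint (B i).tips (B j).tips :=
  (h.disjoint_body i hi j hj hij).mono (h.critical i hi).tips_subset (h.critical j hj).tips_subset

lemma injOn_head (h : IsBlobDecomposition Cl J B mate P) :
    Set.InjOn (fun i => (B i).head) J := by
  intro i hi j hj hij
  by_contra hne
  exact disjoint_left.1 (h.disjoint_tips hi hj hne) (h.critical i hi).head_mem
    (by simpa only [hij] using (h.critical j hj).head_mem)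

lemma notMem_body (h : IsBlobDecomposition Cl J B mate P) (hx : x ∈ P) (hi : i ∈ J) :
    x ∉ (B i).body := fun hxi =>
  mem_compl.1 (h.pool_subset hx) (mem_biUnion.2 ⟨i, hi, hxi⟩)

lemma mate_notMem_body (h : IsBlobDecomposition Cl J B mate P) (hx : x ∈ P) (hi : i ∈ J) :
    mate x ∉ (B i).body := fun hxi => by
  obtain ⟨f, hf, hfP⟩ := h.exists_isMatchingOn
  exact mem_compl.1 (hf.mapsTo x (h.pool_subset hx)) (mem_biUnion.2 ⟨i, hi, hfP x hx ▸ hxi⟩)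

lemma injOn_mate (h : IsBlobDecomposition Cl J B mate P) : Set.InjOn mate P := by
  obtain ⟨f, hf, hfP⟩ := h.exists_isMatchingOn
  intro x hx y hy hxy
  rw [← hf.involutive x (h.pool_subset hx), ← hf.involutive y (h.pool_subset hy), hfP x hx,
    hfP y hy, hxy]

lemma mk_mate_mem (h : IsBlobDecomposition Cl J B mate P) (hx : x ∈ P) : s(x, mate x) ∈ Cl := by
  obtain ⟨f, hf, hfP⟩ := h.exists_isMatchingOn
  exact hfP x hx ▸ hf.edge_mem x (h.pool_subset hx)

lemma notMem_tips_of_mem_liveVertices (h : IsBlobDecomposition Cl J B mate P) (hJ' : J' ⊆ J)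
    (hi : i ∈ J) (hiJ' : i ∉ J') (hp : p ∈ liveVertices J' B mate P) : p ∉ (B i).tips := by
  intro hpi
  rcases mem_union.1 hp with hp | hp
  · obtain ⟨j, hj, hpj⟩ := mem_biUnion.1 hp
    exact disjoint_left.1 (h.disjoint_tips (hJ' hj) hi (by grind)) hpj hpi
  · obtain ⟨x, hx, rfl⟩ := mem_image.1 hp
    exact h.mate_notMem_body hx hi ((h.critical i hi).tips_subset hpi)

lemma notMem_of_mem_liveVertices (h : IsBlobDecomposition Cl J B mate P)
    (hp : p ∈ liveVertices J B mate P) : p ∉ P := by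
  intro hpP
  rcases mem_union.1 hp with hp | hp
  · obtain ⟨i, hi, hpi⟩ := mem_biUnion.1 hp
    exact h.notMem_body hpP hi ((h.critical i hi).tips_subset hpi)
  · obtain ⟨x, hx, rfl⟩ := mem_image.1 hp
    exact h.mate_notMem x hx hpP

lemma merge [DecidableEq ι] (h : IsBlobDecomposition Cl J B mate P) (hi : i ∈ J) (hj : j ∈ J)
    (hij : i ≠ j) {a c : V} (ha : a ∈ (B i).tips) (hc : c ∈ (B j).tips) :
    IsBlobDecomposition (insert s(a, c) Cl) ((J.erase i).erase j) B mate P := by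
  have hE : Cl ⊆ insert s(a, c) Cl := subset_insert _ _
  obtain ⟨f, hf⟩ := ((h.critical i hi).mono hE).exists_isMatchingOn_union
    ((h.critical j hj).mono hE) (h.disjoint_body i hi j hj hij) ha hc (mem_insert_self _ _)
  obtain ⟨g, hg, hgP⟩ := h.exists_isMatchingOn
  set S := (B i).body ∪ (B j).body
  set J' := (J.erase i).erase j
  have hJ' : J' ⊆ J := (erase_subset _ _).trans (erase_subset _ _)
  have hout : (J'.biUnion fun i => (B i).body)ᶜ = S ∪ (J.biUnion fun i => (B i).body)ᶜ := by
    have := h.disjoint_body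
    ext x
    simp only [mem_compl, mem_biUnion, mem_union, S, J', disjoint_left] at *
    grind
  have hdisj : Disjoint S (J.biUnion fun i => (B i).body)ᶜ := by
    simp only [disjoint_left, S, mem_compl, mem_biUnion]
    grind
  refine ⟨fun k hk => (h.critical k (hJ' hk)).mono hE,
    fun k hk l hl => h.disjoint_body k (hJ' hk) l (hJ' hl), ?_, h.mate_notMem,
    S.piecewise f g, ?_, fun x hx => ?_⟩
  · exact h.pool_subset.trans (hout ▸ subset_union_right)
  · exact hout ▸ hf.piecewise (hg.mono hE) hdisj
  · rw [← hgP x hx]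
    exact piecewise_eq_of_notMem _ _ _
      (notMem_union.2 ⟨h.notMem_body hx hi, h.notMem_body hx hj⟩)

lemma raise (h : IsBlobDecomposition Cl J B mate P) {π : ι → V} (hπ : Set.InjOn π J)
    (hπP : ∀ i ∈ J, π i ∈ P) (hP' : P' ⊆ P) (hπP' : ∀ i ∈ J, π i ∉ P') :
    IsBlobDecomposition (Cl ∪ J.image fun i => s((B i).head, π i)) J
      (fun i => (B i).extend (π i) (mate (π i))) mate P' := by
  have hE : Cl ⊆ Cl ∪ J.image fun i => s((B i).head, π i) := subset_union_left
  have hmate : ∀ i ∈ J, ∀ x ∈ P, π i ≠ mate x := fun i hi x hx hix =>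
    h.mate_notMem x hx (hix ▸ hπP i hi)
  obtain ⟨f, hf, hfP⟩ := h.exists_isMatchingOn
  refine ⟨fun i hi => ?_, fun i hi j hj hij => ?_, fun x hx => ?_,
    fun x hx hmx => h.mate_notMem x (hP' hx) (hP' hmx), f, (hf.mono hE).restrict ?_ ?_,
    fun x hx => hfP x (hP' hx)⟩
  · exact ((h.critical i hi).mono hE).extend (h.notMem_body (hπP i hi) hi)
      (h.mate_notMem_body (hπP i hi) hi) (hmate i hi _ (hπP i hi))
      (mem_union_right _ (mem_image_of_mem _ hi)) (hE (h.mk_mate_mem (hπP i hi)))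
  · have := h.disjoint_body i hi j hj hij
    have := h.injOn_mate
    have hx := fun k hk l hl => h.notMem_body (hπP k hk) (i := l) hl
    have hmx := fun k hk l hl => h.mate_notMem_body (hπP k hk) (i := l) hl
    simp only [Blob.extend, disjoint_left, Set.InjOn] at *
    grind
  · refine mem_compl_biUnion_extend.2 ⟨h.pool_subset (hP' hx), fun i hi => ⟨?_, ?_⟩⟩
    · exact fun hxπ => hπP' i hi (hxπ ▸ hx)
    · exact fun hxπ => h.mate_notMem _ (hπP i hi) (hxπ ▸ hP' hx)
  · exact fun x hx => (mem_compl_biUnion_extend.1 hx).1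
  · intro x hx
    obtain ⟨hx, hxπ⟩ := mem_compl_biUnion_extend.1 hx
    refine mem_compl_biUnion_extend.2 ⟨hf.mapsTo x hx, fun i hi => ?_⟩
    have := hf.involutive x hx
    have := hf.involutive (π i) (h.pool_subset (hπP i hi))
    grind

lemma exists_mem_PMfamily {n : ℕ} {Cl : Finset (Sym2 (Fin n))} {B : ι → Blob (Fin n)}
    {mate : Fin n → Fin n} {P : Finset (Fin n)} (h : IsBlobDecomposition Cl ∅ B mate P) :
    ∃ F ∈ PMfamily n, F ⊆ Cl := by
  obtain ⟨f, hf, -⟩ := h.exists_isMatchingOn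
  exact IsMatchingOn.exists_mem_PMfamily (by simpa using hf)

end IsBlobDecomposition

end BlobDecomposition

section BlobPosition

variable {ι V : Type*} [DecidableEq V]

/-- The position of Waiter's strategy in which Client owns `Cl` and the elements outside `D` are
unclaimed. The blobs are extended through the vertices of the pools `X₀` and `X₁` in turn: a new
head is the partner of a vertex of one pool, so that the edges from it to the other pool are still
unclaimed. -/
structure IsBlobPosition [Fintype V] (Cl D : Finset (Sym2 V)) (J : Finset ι) (B : ι → Blob V)
    (mate : V → V) (X₀ X₁ : Finset V) : Prop
    extends IsBlobDecomposition Cl J B mate (X₀ ∪ X₁) where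
  disjoint_pools : Disjoint X₀ X₁
  free_live : ∀ p ∈ liveVertices J B mate (X₀ ∪ X₁), ∀ q ∈ liveVertices J B mate (X₀ ∪ X₁),
    s(p, q) ∉ D
  free_head : ∀ i ∈ J, ∀ x ∈ X₀, s((B i).head, x) ∉ D
  free_mate : ∀ x ∈ X₀, ∀ y ∈ X₁, s(mate x, y) ∉ D ∧ s(mate y, x) ∉ D

namespace IsBlobPosition

variable [Fintype V] {Cl D : Finset (Sym2 V)} {J : Finset ι} {B : ι → Blob V} {mate : V → V}
  {X₀ X₁ : Finset V}

lemma merge [DecidableEq ι] (h : IsBlobPosition Cl D J B mate X₀ X₁) {i j : ι} (hi : i ∈ J)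
    (hj : j ∈ J) (hij : i ≠ j) {a c : V} (ha : a ∈ (B i).tips) (hc : c ∈ (B j).tips)
    (T : Finset V) :
    IsBlobPosition (insert s(a, c) Cl) (D ∪ crossEdges (B i).tips T)
      ((J.erase i).erase j) B mate X₀ X₁ := by
  set J' := (J.erase i).erase j
  have hJ' : J' ⊆ J := (erase_subset _ _).trans (erase_subset _ _)
  have hiJ' : i ∉ J' := by grind
  have htips : (B i).tips ⊆ (B i).body := (h.critical i hi).tips_subset
  have hlive : liveVertices J' B mate (X₀ ∪ X₁) ⊆ liveVertices J B mate (X₀ ∪ X₁) :=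
    union_subset_union_left (biUnion_subset_biUnion_of_subset_left _ hJ')
  have hpool : ∀ x ∈ X₀ ∪ X₁, x ∉ (B i).tips ∧ mate x ∉ (B i).tips := fun x hx =>
    ⟨fun hxi => h.notMem_body hx hi (htips hxi), fun hxi => h.mate_notMem_body hx hi (htips hxi)⟩
  have hfree : ∀ p q, p ∉ (B i).tips → q ∉ (B i).tips → s(p, q) ∉ D →
      s(p, q) ∉ D ∪ crossEdges (B i).tips T := by
    intro p q hp hq hpq
    rw [mem_union, mk_mem_crossEdges]
    tauto
  refine ⟨h.toIsBlobDecomposition.merge hi hj hij ha hc, h.disjoint_pools, ?_, ?_, ?_⟩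
  · exact fun p hp q hq => hfree p q (h.notMem_tips_of_mem_liveVertices hJ' hi hiJ' hp)
      (h.notMem_tips_of_mem_liveVertices hJ' hi hiJ' hq) (h.free_live p (hlive hp) q (hlive hq))
  · exact fun k hk x hx => hfree _ _
      (disjoint_left.1 (h.disjoint_tips (hJ' hk) hi (by grind)) (h.critical k (hJ' hk)).head_mem)
      (hpool x (mem_union_left _ hx)).1 (h.free_head k (hJ' hk) x hx)
  · intro x hx y hy
    obtain ⟨hx', hmx⟩ := hpool x (mem_union_left _ hx)
    obtain ⟨hy', hmy⟩ := hpool y (mem_union_right _ hy)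
    exact ⟨hfree _ _ hmx hy' (h.free_mate x hx y hy).1, hfree _ _ hmy hx' (h.free_mate x hx y hy).2⟩

lemma raise (h : IsBlobPosition Cl D J B mate X₀ X₁) {π : ι → V} (hπ : Set.InjOn π J)
    (hπX : ∀ i ∈ J, π i ∈ X₀) :
    IsBlobPosition (Cl ∪ J.image fun i => s((B i).head, π i))
      (D ∪ crossEdges (J.image fun i => (B i).head) X₀) J
      (fun i => (B i).extend (π i) (mate (π i))) mate X₁ (X₀ \ J.image π) := by
  have hπX' : ∀ i ∈ J, π i ∈ X₀ ∪ X₁ := fun i hi => mem_union_left _ (hπX i hi)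
  have hsub : X₁ ∪ (X₀ \ J.image π) ⊆ X₀ ∪ X₁ := by grind
  have hlive := liveVertices_extend_subset (B := B) (mate := mate) hπX' hsub
  have hliveX : ∀ p ∈ liveVertices J B mate (X₀ ∪ X₁), p ∉ X₀ := fun p hp =>
    (notMem_union.1 (h.notMem_of_mem_liveVertices hp)).1
  have hhead : ∀ x ∈ X₀ ∪ X₁, x ∉ J.image (fun i => (B i).head) ∧
      mate x ∉ J.image (fun i => (B i).head) := by
    intro x hx
    have hbody : ∀ i ∈ J, (B i).head ∈ (B i).body := fun i hi => (h.critical i hi).head_mem_body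
    have := fun i hi => h.notMem_body hx (i := i) hi
    have := fun i hi => h.mate_notMem_body hx (i := i) hi
    simp only [mem_image]
    grind
  have hmate : ∀ x ∈ X₀ ∪ X₁, ∀ y ∈ X₀ ∪ X₁, s(mate x, y) ∉ D →
      s(mate x, y) ∉ D ∪ crossEdges (J.image fun i => (B i).head) X₀ := by
    intro x hx y hy hxy
    rw [mem_union, mk_mem_crossEdges]
    grind
  refine ⟨h.toIsBlobDecomposition.raise hπ hπX' hsub ?_, ?_, ?_, ?_, ?_⟩
  · have := h.disjoint_pools
    rw [disjoint_left] at this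
    grind
  · exact h.disjoint_pools.symm.mono_right sdiff_subset
  · intro p hp q hq
    rw [mem_union, mk_mem_crossEdges]
    grind [h.free_live]
  · exact fun i hi y hy => hmate _ (hπX' i hi) y (mem_union_right _ hy)
      (h.free_mate _ (hπX i hi) y hy).1
  · intro y hy x hx
    have hx' := mem_sdiff.1 hx
    grind [h.free_mate]

end IsBlobPosition

end BlobPosition

section Strategy

variable {ι : Type*} {n b : ℕ} {mate : Fin n → Fin n}

namespace IsBlobPosition

variable {t : ℕ} {win : Finset (Sym2 (Fin n)) → Finset (Sym2 (Fin n)) → Prop}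
  {Cl D : Finset (Sym2 (Fin n))} {J : Finset ι} {B : ι → Blob (Fin n)} {X₀ X₁ : Finset (Fin n)}

lemma forcesWin_of_merge [DecidableEq ι] (h : IsBlobPosition Cl D J B mate X₀ X₁) {i : ι}
    (hi : i ∈ J) (hcard : b < #(B i).tips * ∑ j ∈ J.erase i, #(B j).tips)
    (hwin : ∀ Cl' D' J', J' ⊆ J → #J' + 2 = #J → IsBlobPosition Cl' D' J' B mate X₀ X₁ →
      ForcesWin (Kedges n) b win t Cl' D') :
    ForcesWin (Kedges n) b win (t + 1) Cl D := by
  have hdisj : Disjoint (B i).tips ((J.erase i).biUnion fun j => (B j).tips) :=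
    (disjoint_biUnion_right _ _ _).2 fun j hj =>
      h.disjoint_tips hi (mem_of_mem_erase hj) (ne_of_mem_erase hj).symm
  have hlive : ∀ j ∈ J, ∀ a ∈ (B j).tips, a ∈ liveVertices J B mate (X₀ ∪ X₁) := fun j hj a ha =>
    mem_union_left _ (mem_biUnion.2 ⟨j, hj, ha⟩)
  refine forcesWin_of_crossEdges hdisj ?_ ?_ ?_
  · rwa [card_biUnion fun j hj k hk hjk =>
      h.disjoint_tips (mem_of_mem_erase hj) (mem_of_mem_erase hk) hjk]
  · intro a ha c hc
    obtain ⟨j, hj, hc⟩ := mem_biUnion.1 hc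
    exact h.free_live a (hlive i hi a ha) c (hlive j (mem_of_mem_erase hj) c hc)
  · intro a ha c hc
    obtain ⟨j, hj, hc⟩ := mem_biUnion.1 hc
    refine hwin _ _ _ ((erase_subset j _).trans (erase_subset i J)) ?_
      (h.merge hi (mem_of_mem_erase hj) (ne_of_mem_erase hj).symm ha hc _)
    have := card_erase_add_one hj
    have := card_erase_add_one hi
    omega

lemma forcesWin_of_raise (h : IsBlobPosition Cl D J B mate X₀ X₁) (hcard : #J + b ≤ #X₀)
    (hwin : ∀ Cl' D' π, Set.InjOn π J → (∀ i ∈ J, π i ∈ X₀) →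
      IsBlobPosition Cl' D' J (fun i => (B i).extend (π i) (mate (π i))) mate X₁
        (X₀ \ J.image π) → ForcesWin (Kedges n) b win t Cl' D') :
    ForcesWin (Kedges n) b win (t + #J) Cl D := by
  have hinj := h.injOn_head
  have hdisj : Disjoint (J.image fun i => (B i).head) X₀ :=
    disjoint_left.2 <| forall_mem_image.2 fun i hi hiX =>
      h.notMem_body (mem_union_left _ hiX) hi (h.critical i hi).head_mem_body
  rw [← card_image_of_injOn hinj] at hcard ⊢
  refine forcesWin_of_injection hdisj hcard ?_ fun π hπ hπX => ?_
  · exact forall_mem_image.2 h.free_head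
  · have hπX' : ∀ i ∈ J, π (B i).head ∈ X₀ := fun i hi => hπX _ (mem_image_of_mem _ hi)
    have hinj' : Set.InjOn (fun i => π (B i).head) J := fun i hi j hj hij =>
      hinj hi hj (hπ (mem_image_of_mem _ hi) (mem_image_of_mem _ hj) hij)
    rw [image_image]
    exact hwin _ _ _ hinj' hπX' (h.raise hinj' hπX')

end IsBlobPosition

/-- A bound on the number of rounds spent on raising the number of tips of every blob, starting
from `a` tips each: when it is raised from `i` to `i + 1`, at most `b / i ^ 2 + 1` blobs are
left. -/
def raiseCost (b a : ℕ) : ℕ := ∑ i ∈ Ico a (b.sqrt + 1), (b / i ^ 2 + 1)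

lemma raiseCost_eq_add {a : ℕ} (ha : a ≤ b.sqrt) :
    raiseCost b a = b / a ^ 2 + 1 + raiseCost b (a + 1) :=
  sum_eq_sum_Ico_succ_bot (Nat.lt_succ_of_le ha) _

lemma raiseCost_one_le (b : ℕ) : raiseCost b 1 ≤ 3 * b := by
  have hsum : (∑ i ∈ Ioo 0 (b.sqrt + 1), (b / i ^ 2 : ℕ) : ℝ) ≤ b * 2 :=
    calc (∑ i ∈ Ioo 0 (b.sqrt + 1), (b / i ^ 2 : ℕ) : ℝ)
        ≤ ∑ i ∈ Ioo 0 (b.sqrt + 1), b * ((i : ℝ) ^ 2)⁻¹ := sum_le_sum fun i _ => by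
          rw [← div_eq_mul_inv, ← Nat.cast_pow]
          exact Nat.cast_div_le
      _ = b * ∑ i ∈ Ioo 0 (b.sqrt + 1), ((i : ℝ) ^ 2)⁻¹ := (mul_sum _ _ _).symm
      _ ≤ b * 2 := by
          gcongr
          simpa using sum_Ioo_inv_sq_le (α := ℝ) 0 (b.sqrt + 1)
  have hsum' : ∑ i ∈ Ioo 0 (b.sqrt + 1), b / i ^ 2 ≤ b * 2 := by exact_mod_cast hsum
  have hIco : Ico 1 (b.sqrt + 1) = Ioo 0 (b.sqrt + 1) := rfl
  rw [raiseCost, sum_add_distrib, hIco]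
  simp only [sum_const, Nat.card_Ioo, smul_eq_mul]
  have := Nat.sqrt_le_self b
  omega

theorem IsBlobPosition.forcesWin {Cl D : Finset (Sym2 (Fin n))} {J : Finset ι}
    {B : ι → Blob (Fin n)} {X₀ X₁ : Finset (Fin n)} {a r : ℕ}
    (h : IsBlobPosition Cl D J B mate X₀ X₁) (ha : 0 < a) (htips : ∀ i ∈ J, #(B i).tips = a)
    (hJ : #J = 2 * r) (hX₀ : b + raiseCost b a ≤ #X₀) (hX₁ : b + raiseCost b a ≤ #X₁) :
    ForcesWin (Kedges n) b (fun Cl _ => ∃ F ∈ PMfamily n, F ⊆ Cl) (r + raiseCost b a) Cl D := by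
  classical
  rcases r with _ | r
  · obtain rfl := card_eq_zero.1 hJ
    exact ForcesWin.mono (t := 0) (fun _ _ => h.exists_mem_PMfamily) (Nat.zero_le _)
  by_cases hb : b < a * ((2 * r + 1) * a)
  · obtain ⟨i, hi⟩ : J.Nonempty := card_pos.1 (by omega)
    have hsum : ∑ j ∈ J.erase i, #(B j).tips = (2 * r + 1) * a := by
      rw [sum_const_nat fun j hj => htips j (mem_of_mem_erase hj), card_erase_of_mem hi, hJ]
      rfl
    rw [Nat.add_right_comm]
    refine h.forcesWin_of_merge hi (by rwa [hsum, htips i hi]) fun Cl' D' J' hJ'J hJ' h' => ?_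
    exact h'.forcesWin ha (fun j hj => htips j (hJ'J hj)) (by omega) hX₀ hX₁
  · have hJ_le : #J ≤ b / a ^ 2 + 1 := by
      have : 2 * r + 1 ≤ b / a ^ 2 := (Nat.le_div_iff_mul_le (by positivity)).2 (by nlinarith)
      omega
    have ha_le : a ≤ b.sqrt := Nat.le_sqrt'.2 (by nlinarith)
    have hcost := raiseCost_eq_add ha_le
    refine ForcesWin.mono (h.forcesWin_of_raise (by omega) fun Cl' D' π hπ hπX h' => ?_)
      (by omega : r + 1 + raiseCost b (a + 1) + #J ≤ r + 1 + raiseCost b a)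
    have himage : #(J.image π) = #J := card_image_of_injOn hπ
    have hsdiff := le_card_sdiff (J.image π) X₀
    refine h'.forcesWin (a := a + 1) (Nat.succ_pos a) (fun i hi => ?_) hJ (by omega) (by omega)
    have hmate : mate (π i) ∉ (B i).tips := fun hmem =>
      h.mate_notMem_body (mem_union_left _ (hπX i hi)) hi ((h.critical i hi).tips_subset hmem)
    simp only [Blob.extend, card_insert_of_notMem hmate, htips i hi]
termination_by (b.sqrt + 1 - a, r)

end Strategy

section Opening

section Single

variable {V : Type*} [Fintype V] [DecidableEq V] {Cl D : Finset (Sym2 V)}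

lemma isBlobDecomposition_single {J P : Finset V} {f : V → V} (hf : IsMatchingOn Cl Jᶜ f)
    (hP : P ⊆ Jᶜ) (hfP : ∀ x ∈ P, f x ∉ P) : IsBlobDecomposition Cl J Blob.single f P := by
  have hbody : (J.biUnion fun v => (Blob.single v).body) = J := biUnion_singleton_eq_self
  refine ⟨fun v _ => .single v, ?_, hbody.symm ▸ hP, hfP, f, hbody.symm ▸ hf, fun _ _ => rfl⟩
  exact fun v _ w _ hvw => disjoint_singleton.2 hvw

lemma isBlobPosition_single {J X R Z : Finset V} {f : V → V} (hf : IsMatchingOn Cl Jᶜ f)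
    (hJ : J ⊆ Z) (hXR : Disjoint X R) (hZ : Disjoint (X ∪ R) Z)
    (hfX : ∀ x ∈ X, f x ∉ X ∪ R ∪ Z) (hfR : ∀ y ∈ R, f y ∈ Z)
    (hD : D ⊆ crossEdges X Zᶜ ∪ crossEdges R Z) : IsBlobPosition Cl D J Blob.single f X R := by
  simp only [mem_union, not_or] at hfX
  have hXRZ : ∀ v ∈ Z, v ∉ X ∧ v ∉ R := fun v hv => by
    simpa only [mem_union, not_or] using disjoint_right.1 hZ hv
  have hlive : ∀ p ∈ liveVertices J Blob.single f (X ∪ R), p ∉ X ∧ p ∉ R := by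
    intro p
    simp only [liveVertices, Blob.single, mem_union, mem_biUnion, mem_image, mem_singleton]
    rintro (⟨v, hv, rfl⟩ | ⟨x, hx | hx, rfl⟩)
    · exact hXRZ p (hJ hv)
    · exact (hfX x hx).1
    · exact hXRZ _ (hfR x hx)
  have hfree : ∀ p q, p ∉ X → p ∉ R → q ∉ X ∨ p ∈ Z → q ∉ R ∨ p ∉ Z → s(p, q) ∉ D := by
    intro p q hpX hpR hq hq' hpq
    have := mem_union.1 (hD hpq)
    simp only [mk_mem_crossEdges, mem_compl] at this
    tauto
  refine ⟨isBlobDecomposition_single hf ?_ ?_, hXR, ?_, ?_, ?_⟩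
  · exact subset_compl_iff_disjoint_right.2 (hZ.mono_right hJ)
  · intro x hx
    rcases mem_union.1 hx with hx | hx
    · simpa only [mem_union, not_or] using (hfX x hx).1
    · simpa only [mem_union, not_or] using hXRZ _ (hfR x hx)
  · exact fun p hp q hq => hfree p q (hlive p hp).1 (hlive p hp).2 (.inl (hlive q hq).1)
      (.inl (hlive q hq).2)
  · exact fun v hv x hx => hfree v x (hXRZ v (hJ hv)).1 (hXRZ v (hJ hv)).2 (.inr (hJ hv))
      (.inl (disjoint_left.1 hXR hx))
  · exact fun x hx y hy => ⟨hfree _ y (hfX x hx).1.1 (hfX x hx).1.2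
      (.inl (disjoint_right.1 hXR hy)) (.inr (hfX x hx).2),
      hfree _ x (hXRZ _ (hfR y hy)).1 (hXRZ _ (hfR y hy)).2 (.inr (hfR y hy))
      (.inl (disjoint_left.1 hXR hx))⟩

lemma exists_isBlobPosition_single {X Y Z R : Finset V} {π ρ : V → V} (hXY : Disjoint X Y)
    (hZ : Z = (X ∪ Y)ᶜ) (hR : R = Y \ X.image π)
    (hπ : Set.InjOn π X) (hπY : ∀ x ∈ X, π x ∈ Y) (hπCl : ∀ x ∈ X, s(x, π x) ∈ Cl)
    (hρ : Set.InjOn ρ R) (hρZ : ∀ y ∈ R, ρ y ∈ Z) (hρCl : ∀ y ∈ R, s(y, ρ y) ∈ Cl)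
    (hD : D ⊆ crossEdges X Y ∪ crossEdges R Z) :
    ∃ mate, IsBlobPosition Cl D (Z \ R.image ρ) Blob.single mate X R := by
  have hπX : X.image π ⊆ Y := image_subset_iff.2 hπY
  have hρR : R.image ρ ⊆ Z := image_subset_iff.2 hρZ
  have hRY : R ⊆ Y := hR ▸ sdiff_subset
  have hXYZ : Disjoint (X ∪ Y) Z := hZ ▸ disjoint_compl_right
  have hXZ : Disjoint X Z := hXYZ.mono_left subset_union_left
  have hYZ : Disjoint Y Z := hXYZ.mono_left subset_union_right
  obtain ⟨f, hf, hfX⟩ := exists_isMatchingOn_union_image hπ (hXY.mono_right hπX) hπCl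
  obtain ⟨g, hg, hgR⟩ := exists_isMatchingOn_union_image hρ (hYZ.mono hRY hρR) hρCl
  have hXR : Disjoint (X ∪ X.image π) R :=
    disjoint_union_left.2 ⟨hXY.mono_right hRY, hR ▸ disjoint_sdiff⟩
  have hXρ : Disjoint (X ∪ X.image π) (R.image ρ) :=
    hXYZ.mono (union_subset_union_right hπX) hρR
  have hfg := hf.piecewise hg (disjoint_union_right.2 ⟨hXR, hXρ⟩)
  have hcover : X ∪ X.image π ∪ (R ∪ R.image ρ) = (Z \ R.image ρ)ᶜ := by
    ext v
    have := @hπX v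
    have := @hρR v
    simp only [hR, hZ, mem_compl, mem_sdiff, mem_union] at *
    tauto
  refine ⟨_, isBlobPosition_single (hcover ▸ hfg) sdiff_subset (hXY.mono_right hRY)
    (hXYZ.mono_left (union_subset_union_right hRY)) (fun x hx => ?_) (fun y hy => ?_)
    (hD.trans (union_subset_union_left
      (crossEdges_subset subset_rfl (subset_compl_iff_disjoint_right.2 hYZ))))⟩
  · rw [piecewise_eq_of_mem _ _ _ (mem_union_left _ hx), hfX x hx, mem_union, mem_union, not_or,
      not_or]
    have hπx := mem_image_of_mem π hx
    exact ⟨⟨disjoint_right.1 hXY (hπY x hx),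
      disjoint_left.1 hXR (mem_union_right _ hπx)⟩, disjoint_left.1 hYZ (hπY x hx)⟩
  · rw [piecewise_eq_of_notMem _ _ _ (disjoint_right.1 hXR hy), hgR y hy]
    exact hρZ y hy

end Single

theorem forcesWin_perfectMatching {n b : ℕ} (hn : Even n) (hb : 17 * b ≤ n) :
    ForcesWin (Kedges n) b (fun Cl _ => ∃ F ∈ PMfamily n, F ⊆ Cl) (n / 2 + 3 * b) ∅ ∅ := by
  obtain ⟨X, -, hX⟩ := exists_subset_card_eq (s := (univ : Finset (Fin n))) (n := 4 * b)
    (by simp; omega)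
  obtain ⟨Y, hYX, hY⟩ := exists_subset_card_eq (s := Xᶜ) (n := 8 * b)
    (by simp [card_compl]; omega)
  have hXY : Disjoint X Y := disjoint_compl_right.mono_right hYX
  have hZ : #(X ∪ Y)ᶜ = n - 12 * b := by
    rw [card_compl, card_union_of_disjoint hXY, Fintype.card_fin]
    omega
  refine ForcesWin.mono (t := (n - 16 * b) / 2 + 3 * b + 4 * b + #X) ?_ (by omega)
  refine forcesWin_of_injection hXY (by omega) (by simp) fun π hπ hπY => ?_
  have hR : #(Y \ X.image π) = 4 * b := by
    rw [card_sdiff_of_subset (image_subset_iff.2 hπY), card_image_of_injOn hπ]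
    omega
  rw [← hR]
  refine forcesWin_of_injection (Y := (X ∪ Y)ᶜ) ?_ (by omega) ?_ fun ρ hρ hρZ => ?_
  · exact disjoint_compl_right.mono_left (sdiff_subset.trans subset_union_right)
  · intro y hy z hz
    simp only [mem_sdiff, mem_compl, mem_union] at hy hz
    simp only [empty_union, mk_mem_crossEdges]
    tauto
  obtain ⟨mate, hpos⟩ := exists_isBlobPosition_single
    (Cl := ∅ ∪ (X.image fun x => s(x, π x)) ∪ (Y \ X.image π).image fun y => s(y, ρ y))
    (D := ∅ ∪ crossEdges X Y ∪ crossEdges (Y \ X.image π) (X ∪ Y)ᶜ)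
    hXY rfl rfl hπ hπY
    (fun x hx => mem_union_left _ (mem_union_right _ (mem_image_of_mem _ hx))) hρ hρZ
    (fun y hy => mem_union_right _ (mem_image_of_mem _ hy)) (by simp)
  have hJ : #((X ∪ Y)ᶜ \ (Y \ X.image π).image ρ) = 2 * ((n - 16 * b) / 2) := by
    rw [card_sdiff_of_subset (image_subset_iff.2 hρZ), card_image_of_injOn hρ, hZ, hR]
    obtain ⟨k, rfl⟩ := hn
    omega
  have hcost := raiseCost_one_le b
  exact (hpos.forcesWin one_pos (fun _ _ => rfl) hJ (by omega) (by omega)).mono (by omega)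

end Opening

end WaiterClient

/-- There exist constants `δ, C > 0` such that for every large enough even `n` and every
positive integer `b ≤ δn`, in the `b`-biased Waiter-Client perfect matching game on `K_n`,
Waiter can win within `n/2 + C·b` rounds. -/
theorem WC_perfect_matching_biased :
    ∃ δ C : ℝ, 0 < δ ∧ 0 < C ∧ ∃ n₀ : ℕ, ∀ n : ℕ, n₀ ≤ n → Even n →
      ∀ b : ℕ, 1 ≤ b → (b : ℝ) ≤ δ * n →
        (tauWC (Kedges n) (PMfamily n) b : ℝ) ≤ (n : ℝ) / 2 + C * b := by
  refine ⟨1 / 17, 3, by norm_num, by norm_num, 0, fun n _ hn b _ hbn => ?_⟩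
  have hb : 17 * b ≤ n := by
    have : (17 : ℝ) * b ≤ n := by linarith
    exact_mod_cast this
  have htau : tauWC (Kedges n) (PMfamily n) b ≤ n / 2 + 3 * b :=
    Nat.sInf_le (WaiterClient.forcesWin_perfectMatching hn hb ∅ (by simp))
  calc (tauWC (Kedges n) (PMfamily n) b : ℝ) ≤ ((n / 2 + 3 * b : ℕ) : ℝ) := by exact_mod_cast htau
    _ ≤ (n : ℝ) / 2 + 3 * b := by
      push_cast
      gcongr
      exact_mod_cast Nat.cast_div_le (α := ℝ) (m := n) (n := 2)
end

section
/- There exist constants δ > 0 and C > 0 such that for every large enough integer n and every positive integer b ≤ δn, in the b-biased Waiter-Client game on the edge set of K_n whose winning sets are the Hamilton cycles of K_n, Waiter has a strategy to win within n + Cb rounds; that is, τ_WC(H_n, b) ≤ n + Cb. -/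
open Finset

/-- The family of edge sets of Hamilton cycles of `K_n`. -/
def HamFamily (n : ℕ) : Set (Finset (Sym2 (Fin n))) :=
  {F | ∃ (u : Fin n) (p : (⊤ : SimpleGraph (Fin n)).Walk u u),
    p.IsHamiltonianCycle ∧ F = p.edges.toFinset}

/-!
Waiter first lets Client grow a path greedily, always offering edges from its free end to new
vertices; no round is wasted until only a reservoir of `Θ(b)` vertices is left. Inside the reservoir
a linear number of rounds forces an expander: a union bound over all sets violating expansion is
derandomised by a potential which Waiter keeps below one. By Pósa's rotation lemma, as long as
Client's longest path in an expander does not span it, quadratically many edges would extend it, and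
only linearly many rounds are needed to offer enough of them to reach a spanning path. Rotating that
spanning path offers linearly many vertices to attach either end of the long path to, so two further
rounds close the Hamilton cycle. Only the `O(b)` rounds in the reservoir exceed the path's length.
-/

section Game

variable {X : Type*} [DecidableEq X]

/-- `CanForce E b P t C K`: starting with Client owning `C` and with the elements of `K` already
offered, Waiter can reach within `t` rounds, offering exactly `b + 1` elements of `E \ K` each time,
a position `(C', K')` satisfying `P`. Recording the set of offered elements instead of Waiter's own
elements makes the second coordinate independent of Client's choices. -/
inductive CanForce (E : Finset X) (b : ℕ) (P : Finset X → Finset X → Prop) :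
    ℕ → Finset X → Finset X → Prop
  | now {t : ℕ} {C K : Finset X} (h : P C K) : CanForce E b P t C K
  | offer {t : ℕ} {C K : Finset X} (O : Finset X) (hO : O ⊆ E \ K) (hcard : #O = b + 1)
      (h : ∀ x ∈ O, CanForce E b P t (insert x C) (K ∪ O)) : CanForce E b P (t + 1) C K

namespace CanForce

variable {E E' C K : Finset X} {b t t' : ℕ} {P Q : Finset X → Finset X → Prop}

theorem offer_of_le_card {I : Finset X} (hI : I ⊆ E \ K) (hcard : b + 1 ≤ #I)
    (h : ∀ O ⊆ I, #O = b + 1 → ∀ x ∈ O, CanForce E b P t (insert x C) (K ∪ O)) :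
    CanForce E b P (t + 1) C K := by
  obtain ⟨O, hOI, hO⟩ := exists_subset_card_eq hcard
  exact .offer O (hOI.trans hI) hO (h O hOI hO)

theorem mono_rounds (h : CanForce E b P t C K) (ht : t ≤ t') : CanForce E b P t' C K := by
  induction h generalizing t' with
  | now h => exact .now h
  | offer O hO hcard _ ih =>
    obtain ⟨t', rfl⟩ := Nat.exists_eq_add_of_lt ht
    exact .offer O hO hcard fun x hx => ih x hx (Nat.le_add_right _ _)

theorem bind (h : CanForce E b P t C K) (hE : E ⊆ E')
    (hPQ : ∀ C' K', P C' K' → CanForce E' b Q t' C' K') : CanForce E' b Q (t + t') C K := by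
  induction h with
  | now h => exact (hPQ _ _ h).mono_rounds (Nat.le_add_left _ _)
  | offer O hO hcard _ ih =>
    rw [Nat.add_right_comm]
    exact .offer O (hO.trans (sdiff_subset_sdiff hE subset_rfl)) hcard ih

theorem imp (h : CanForce E b P t C K) (hPQ : ∀ C' K', P C' K' → Q C' K') :
    CanForce E b Q t C K :=
  h.bind (t' := 0) subset_rfl fun C' K' hP => .now (hPQ C' K' hP)

theorem with_history (h : CanForce E b P t C K) :
    CanForce E b (fun C' K' => P C' K' ∧ C ⊆ C' ∧ K' ⊆ K ∪ E ∧
      #(K' ∩ E) ≤ #(K ∩ E) + t * (b + 1)) t C K := by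
  induction h with
  | now h => exact .now ⟨h, subset_rfl, subset_union_left, Nat.le_add_right _ _⟩
  | @offer t C K O hO hcard _ ih =>
    refine .offer O hO hcard fun x hx => (ih x hx).imp ?_
    rintro C' K' ⟨hP, hC, hK, hcount⟩
    have hOE : O ⊆ E := hO.trans sdiff_subset
    refine ⟨hP, (subset_insert x C).trans hC, hK.trans ?_, hcount.trans ?_⟩
    · rw [union_assoc, union_eq_right.2 hOE]
    · calc #((K ∪ O) ∩ E) + t * (b + 1) ≤ #(K ∩ E) + #O + t * (b + 1) := by
            rw [union_inter_distrib_right, inter_eq_left.2 hOE]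
            gcongr
            exact card_union_le _ _
        _ = #(K ∩ E) + (t + 1) * (b + 1) := by rw [hcard]; ring

theorem waiterWins {board W : Finset X} {win : Finset X → Prop} (hE : E ⊆ board)
    (h : CanForce E b (fun C' _ => win C') t C (C ∪ W)) :
    WaiterWins board b (fun C' _ => win C') t C W := by
  generalize hK : C ∪ W = K at h
  induction h generalizing W with
  | @now t C K h =>
    cases t with
    | zero => exact h
    | succ t => exact Or.inl h
  | @offer t C K O hO hcard _ ih =>
    subst hK
    have hOboard : O ⊆ board \ (C ∪ W) := hO.trans (sdiff_subset_sdiff hE subset_rfl)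
    refine Or.inr ⟨O, card_pos.1 (by omega), hOboard, ?_, fun x hx => ih x hx ?_⟩
    · rw [min_eq_left (hcard ▸ card_le_card hOboard), hcard]
    · rw [insert_union, ← union_insert, ← union_insert, insert_erase hx, union_assoc]

end CanForce

end Game

section Rotation

variable {V : Type*} {r : V → V → Prop} {L L' P Q : List V} {s x y : V}

/-- `IsRotation r L L'`: the list `L'` arises from `L` by successive Pósa rotations. A rotation uses
a relation `r e x` between the first entry `e` and some later entry `x` to reverse the part of the
list before `x`; the last entry stays fixed. -/
inductive IsRotation (r : V → V → Prop) (L : List V) : List V → Prop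
  | refl : IsRotation r L L
  | rotate {e : V} {pre : List V} {x : V} {post : List V}
      (h : IsRotation r L (e :: pre ++ x :: post)) (hex : r e x) :
      IsRotation r L ((e :: pre).reverse ++ x :: post)

namespace IsRotation

theorem perm (h : IsRotation r L L') : L'.Perm L := by
  induction h with
  | refl => exact .refl L
  | rotate _ _ ih => exact ((List.reverse_perm _).append_right _).trans ih

theorem getLast?_eq (h : IsRotation r L L') : L'.getLast? = L.getLast? := by
  induction h with
  | refl => rfl
  | rotate _ _ ih => simpa [List.getLast?_append, List.getLast?_cons] using ih

theorem isChain [Std.Symm r] (h : IsRotation r L L') (hL : L.IsChain r) : L'.IsChain r := by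
  induction h with
  | refl => exact hL
  | rotate _ hex ih =>
    obtain ⟨hpre, hpost, -⟩ := List.isChain_append.1 ih
    refine List.isChain_append.2 ⟨?_, hpost, by simpa using hex⟩
    exact List.isChain_reverse.2 (hpre.imp fun a b hab => symm_of r hab)

end IsRotation

/-- The vertices `x` and `y` are neighbours along the path listed by `L`. -/
def Consecutive (L : List V) (x y : V) : Prop := [x, y] <:+: L ∨ [y, x] <:+: L

theorem pair_infix_iff_not_isChain :
    [x, y] <:+: L ↔ ¬ L.IsChain (fun a b => ¬ (a = x ∧ b = y)) := by
  simp [List.isChain_iff_forall_rel_of_append_cons_cons, List.IsInfix, eq_comm]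

theorem pair_infix_append_iff : [x, y] <:+: P ++ Q ↔
    [x, y] <:+: P ∨ [x, y] <:+: Q ∨ x ∈ P.getLast? ∧ y ∈ Q.head? := by
  simp only [pair_infix_iff_not_isChain, List.isChain_append]
  grind

theorem consecutive_append_iff : Consecutive (P ++ Q) x y ↔ Consecutive P x y ∨ Consecutive Q x y ∨
    (x ∈ P.getLast? ∧ y ∈ Q.head?) ∨ (y ∈ P.getLast? ∧ x ∈ Q.head?) := by
  simp only [Consecutive, pair_infix_append_iff]
  tauto

theorem consecutive_reverse_iff : Consecutive P.reverse x y ↔ Consecutive P x y := by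
  have h (a b : V) : [a, b] <:+: P.reverse ↔ [b, a] <:+: P := by
    rw [← List.reverse_infix, List.reverse_reverse]
    rfl
  rw [Consecutive, Consecutive, h, h, or_comm]

theorem eq_of_pair_infix (hL : L.Nodup) (hx : [x, s] <:+: L) (hy : [y, s] <:+: L) : x = y := by
  obtain ⟨l₁, l₂, rfl⟩ := hx
  obtain ⟨m₁, m₂, h⟩ := hy
  have hs : s ∉ l₁ ++ [x] := by grind
  have hs' : s ∉ l₂ := by grind
  have key : (l₁ ++ [x]) ++ s :: l₂ = (m₁ ++ [y]) ++ s :: m₂ := by simpa using h.symm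
  simpa using congrArg List.getLast? ((List.append_cons_inj_of_notMem hs hs').1 key).1

variable [DecidableEq V]

open Classical in
theorem card_consecutive_le_two (hL : L.Nodup) (s : V) :
    #{x ∈ L.toFinset | Consecutive L x s} ≤ 2 := by
  have hpred : #{x ∈ L.toFinset | [x, s] <:+: L} ≤ 1 := card_le_one.2 fun x hx y hy =>
    eq_of_pair_infix hL (mem_filter.1 hx).2 (mem_filter.1 hy).2
  have hsucc : #{x ∈ L.toFinset | [s, x] <:+: L} ≤ 1 := card_le_one.2 fun x hx y hy =>
    eq_of_pair_infix (List.nodup_reverse.2 hL) (List.reverse_infix.2 (mem_filter.1 hx).2)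
      (List.reverse_infix.2 (mem_filter.1 hy).2)
  refine (card_le_card fun x hx => ?_).trans
    ((card_union_le _ _).trans (Nat.add_le_add hpred hsucc))
  obtain ⟨hxL, hxs⟩ := mem_filter.1 hx
  exact mem_union.2 (hxs.imp (fun h => mem_filter.2 ⟨hxL, h⟩) fun h => mem_filter.2 ⟨hxL, h⟩)

open Classical in
/-- The first entries of the rotations of `L`. -/
noncomputable def rotationEndpoints (r : V → V → Prop) (L : List V) : Finset V :=
  {s ∈ L.toFinset | ∃ L', IsRotation r L L' ∧ s ∈ L'.head?}

theorem mem_rotationEndpoints_iff :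
    s ∈ rotationEndpoints r L ↔ ∃ L', IsRotation r L L' ∧ s ∈ L'.head? := by
  simp only [rotationEndpoints, mem_filter, List.mem_toFinset, and_iff_right_iff_imp]
  rintro ⟨L', hL', hs⟩
  exact hL'.perm.mem_iff.1 (List.mem_of_mem_head? hs)

theorem rotationEndpoints_subset : rotationEndpoints r L ⊆ L.toFinset := by
  classical exact filter_subset _ _

namespace IsRotation

variable {e : V} {pre post : List V}

theorem exists_pred_mem_rotationEndpoints (h : IsRotation r L (e :: pre ++ x :: post))
    (hex : r e x) :
    ∃ s ∈ rotationEndpoints r L, Consecutive (e :: pre ++ x :: post) x s := by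
  obtain ⟨s, hs⟩ : ∃ s, s ∈ (e :: pre).getLast? := by simp [List.getLast?_cons]
  refine ⟨s, mem_rotationEndpoints_iff.2 ⟨_, h.rotate hex, ?_⟩, ?_⟩
  · rw [List.head?_append, List.head?_reverse, hs]
    rfl
  · exact consecutive_append_iff.2 (.inr (.inr (.inr ⟨hs, rfl⟩)))

/-- A rotation changes the neighbourhoods of three vertices only: the old endpoint, the new endpoint
and the vertex `x` it pivots at, which preceded `x` in the path. -/
theorem consecutive_of_forall_rotationEndpoints (h : IsRotation r L L')
    (hx : ∀ s ∈ rotationEndpoints r L, x ≠ s ∧ ¬ Consecutive L x s) (hxy : Consecutive L' x y) :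
    Consecutive L x y := by
  induction h generalizing y with
  | refl => exact hxy
  | @rotate e pre z post h hez ih =>
    have hxe : x ≠ e := (hx e (mem_rotationEndpoints_iff.2 ⟨_, h, rfl⟩)).1
    have hxz : x ≠ z := by
      rintro rfl
      obtain ⟨s, hs, hxs⟩ := h.exists_pred_mem_rotationEndpoints hez
      exact (hx s hs).2 (ih hxs)
    refine ih (consecutive_append_iff.2 ?_)
    rw [consecutive_append_iff, consecutive_reverse_iff] at hxy
    rcases hxy with hpre | hpost | ⟨hlast, -⟩ | ⟨-, hhead⟩
    · exact .inl hpre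
    · exact .inr (.inl hpost)
    · exact absurd (by simpa using hlast.symm) hxe
    · exact absurd (by simpa using hhead.symm) hxz

end IsRotation

theorem exists_consecutive_of_rel_rotationEndpoints (hs : s ∈ rotationEndpoints r L) (hx : x ∈ L)
    (hsx : r s x) : ∃ s' ∈ rotationEndpoints r L, x = s' ∨ Consecutive L x s' := by
  by_contra! hcon
  obtain ⟨L', hL', hhead⟩ := mem_rotationEndpoints_iff.1 hs
  obtain ⟨rest, rfl⟩ := List.head?_eq_some_iff.1 hhead
  have hxrest : x ∈ rest := by
    simpa [(hcon s hs).1] using hL'.perm.mem_iff.2 hx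
  obtain ⟨pre, post, rfl⟩ := List.append_of_mem hxrest
  obtain ⟨s', hs', hxs'⟩ := hL'.exists_pred_mem_rotationEndpoints hsx
  exact (hcon s' hs').2 (hL'.consecutive_of_forall_rotationEndpoints hcon hxs')

theorem exists_card_le_three_mul_card_rotationEndpoints (r : V → V → Prop) (hL : L.Nodup) :
    ∃ W : Finset V, #W ≤ 3 * #(rotationEndpoints r L) ∧
      ∀ s ∈ rotationEndpoints r L, ∀ x ∈ L, r s x → x ∈ W := by
  classical
  refine ⟨(rotationEndpoints r L).biUnion fun s => insert s {x ∈ L.toFinset | Consecutive L x s},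
    ?_, fun s hs x hx hsx => ?_⟩
  · rw [mul_comm]
    refine card_biUnion_le_card_mul _ _ _ fun s _ => (card_insert_le _ _).trans ?_
    exact Nat.succ_le_succ (card_consecutive_le_two hL s)
  · obtain ⟨s', hs', hxs'⟩ := exists_consecutive_of_rel_rotationEndpoints hs hx hsx
    simp only [mem_biUnion, mem_insert, mem_filter, List.mem_toFinset]
    exact ⟨s', hs', hxs'.imp_right fun h => ⟨hx, h⟩⟩

end Rotation

section Expander

variable {V : Type*} {A : Finset V} {C C' : Finset (Sym2 V)} {k : ℕ}

/-- In the graph with edge set `C`, some vertex of `S` has a neighbour in `A` outside `W`. -/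
def HasExit (A : Finset V) (C : Finset (Sym2 V)) (S W : Finset V) : Prop :=
  ∃ v ∈ S, ∃ x ∈ A, x ∉ W ∧ s(v, x) ∈ C

theorem HasExit.mono {S W : Finset V} (h : HasExit A C S W) (hC : C ⊆ C') : HasExit A C' S W := by
  obtain ⟨v, hv, x, hx, hxW, hvx⟩ := h
  exact ⟨v, hv, x, hx, hxW, hC hvx⟩

/-- The graph with edge set `C` expands sets of at most `k` vertices of `A` by a factor of more than
three: the neighbourhood of such a set `S` inside `A` is not covered by `3 * #S` vertices. -/
def IsExpander (A : Finset V) (k : ℕ) (C : Finset (Sym2 V)) : Prop :=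
  ∀ S ⊆ A, S.Nonempty → #S ≤ k → ∀ W, #W ≤ 3 * #S → HasExit A C S W

theorem IsExpander.mono (h : IsExpander A k C) (hC : C ⊆ C') : IsExpander A k C' :=
  fun S hS hne hk W hW => (h S hS hne hk W hW).mono hC

end Expander

section Path

variable {V : Type*} [DecidableEq V] {A B S : Finset V} {C C' I K : Finset (Sym2 V)}
  {L L' : List V} {u v x y : V} {b k ℓ t : ℕ}

/-- The edge set of the complete graph on `A`. -/
def edgesIn (A : Finset V) : Finset (Sym2 V) := {e ∈ A.sym2 | ¬ e.IsDiag}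

theorem mk_mem_edgesIn_iff : s(x, y) ∈ edgesIn A ↔ x ∈ A ∧ y ∈ A ∧ x ≠ y := by
  simp [edgesIn, and_assoc]

theorem edgesIn_mono (h : A ⊆ B) : edgesIn A ⊆ edgesIn B :=
  filter_subset_filter _ (sym2_mono h)

/-- The star with centre `v` and set of leaves `T`. -/
def starEdges (v : V) (T : Finset V) : Finset (Sym2 V) := T.image fun x => s(v, x)

theorem card_starEdges (v : V) (T : Finset V) : #(starEdges v T) = #T :=
  card_image_of_injective T fun _ _ h => Sym2.congr_right.1 h

theorem mk_mem_starEdges_iff :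
    s(u, x) ∈ starEdges v B ↔ u = v ∧ x ∈ B ∨ x = v ∧ u ∈ B := by
  simp only [starEdges, mem_image, Sym2.eq_iff]
  grind

theorem starEdges_subset_iff : starEdges v B ⊆ I ↔ ∀ x ∈ B, s(v, x) ∈ I := image_subset_iff

theorem CanForce.offer_star {E : Finset (Sym2 V)} {P : Finset (Sym2 V) → Finset (Sym2 V) → Prop}
    (hB : starEdges v B ⊆ E \ K) (hcard : b + 1 ≤ #B)
    (h : ∀ S ⊆ B, #S = b + 1 → ∀ x ∈ S,
      CanForce E b P t (insert s(v, x) C) (K ∪ starEdges v S)) :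
    CanForce E b P (t + 1) C K := by
  obtain ⟨S, hS, hScard⟩ := exists_subset_card_eq hcard
  refine .offer (starEdges v S) ((image_subset_image hS).trans hB)
    ((card_starEdges v S).trans hScard) fun e he => ?_
  obtain ⟨x, hx, rfl⟩ := mem_image.1 he
  exact h S hS hScard x hx

theorem card_mul_le_two_mul_card_of_starEdges_subset
    (h : ∀ v ∈ S, ∃ T, k ≤ #T ∧ starEdges v T ⊆ I) : #S * k ≤ 2 * #I := by
  rw [mul_comm 2]
  refine card_mul_le_card_mul (fun v e => v ∈ e) (fun v hv => ?_) fun e _ => ?_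
  · obtain ⟨T, hT, hTI⟩ := h v hv
    rw [← card_starEdges v T] at hT
    refine hT.trans (card_le_card fun e he => mem_filter.2 ⟨hTI he, ?_⟩)
    obtain ⟨x, -, rfl⟩ := mem_image.1 he
    exact Sym2.mem_mk_left v x
  · have hsub : S.bipartiteBelow (fun v e => v ∈ e) e ⊆ e.toFinset := fun v hv =>
      Sym2.mem_toFinset.2 (mem_filter.1 hv).2
    exact (card_le_card hsub).trans (by rw [Sym2.card_toFinset]; split <;> simp)

instance (C : Finset (Sym2 V)) : Std.Symm fun u v : V => s(u, v) ∈ C where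
  symm _ _ h := Sym2.eq_swap ▸ h

/-- The list `L` enumerates the vertices of a path inside `A` all of whose edges belong to `C`. -/
structure IsPathIn (A : Finset V) (C : Finset (Sym2 V)) (L : List V) : Prop where
  nodup : L.Nodup
  subset : L.toFinset ⊆ A
  isChain : L.IsChain fun u v => s(u, v) ∈ C

namespace IsPathIn

theorem mono (h : IsPathIn A C L) (hA : A ⊆ B) (hC : C ⊆ C') : IsPathIn B C' L :=
  ⟨h.nodup, h.subset.trans hA, h.isChain.imp fun _ _ huv => hC huv⟩

theorem card_toFinset (h : IsPathIn A C L) : #L.toFinset = L.length :=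
  List.toFinset_card_of_nodup h.nodup

theorem length_le (h : IsPathIn A C L) : L.length ≤ #A :=
  h.card_toFinset.symm.trans_le (card_le_card h.subset)

theorem reverse (h : IsPathIn A C L) : IsPathIn A C L.reverse where
  nodup := List.nodup_reverse.2 h.nodup
  subset := by simpa using h.subset
  isChain := List.isChain_reverse.2 (h.isChain.imp fun _ _ huv => symm_of _ huv)

theorem append (h : IsPathIn A C L) (h' : IsPathIn A C L') (hdisj : L.Disjoint L')
    (hjoin : ∀ u ∈ L.getLast?, ∀ v ∈ L'.head?, s(u, v) ∈ C) : IsPathIn A C (L ++ L') where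
  nodup := h.nodup.append h'.nodup hdisj
  subset := by simpa using union_subset h.subset h'.subset
  isChain := List.isChain_append.2 ⟨h.isChain, h'.isChain, hjoin⟩

theorem cons (h : IsPathIn A C L) (hvA : v ∈ A) (hvL : v ∉ L)
    (hjoin : ∀ u ∈ L.head?, s(v, u) ∈ C) : IsPathIn A C (v :: L) :=
  append (L := [v]) ⟨by simp, by simpa using hvA, by simp⟩ h (by simpa using hvL)
    (by simpa using hjoin)

theorem ne_of_ends (h : IsPathIn A C L) (hlen : 1 < L.length) (hu : u ∈ L.getLast?)
    (hv : v ∈ L.head?) : u ≠ v := by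
  obtain ⟨rest, rfl⟩ := List.head?_eq_some_iff.1 hv
  have hrest : rest ≠ [] := by rintro rfl; simp at hlen
  rintro rfl
  rw [List.getLast?_cons_of_ne_nil hrest] at hu
  exact (List.nodup_cons.1 h.nodup).1 (List.mem_of_mem_getLast? hu)

theorem of_isRotation (h : IsPathIn A C L) (hL' : IsRotation (fun u v => s(u, v) ∈ C) L L') :
    IsPathIn A C L' where
  nodup := hL'.perm.nodup_iff.2 h.nodup
  subset := (List.toFinset_eq_of_perm _ _ hL'.perm).trans_subset h.subset
  isChain := hL'.isChain h.isChain

end IsPathIn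

/-- The list `L` enumerates, in cyclic order, the vertices of a cycle inside `A` all of whose edges
belong to `C`. Degenerate cycles on fewer than three vertices are allowed. -/
structure IsCycleIn (A : Finset V) (C : Finset (Sym2 V)) (L : List V) : Prop
    extends IsPathIn A C L where
  closed : ∀ u ∈ L.getLast?, ∀ v ∈ L.head?, s(u, v) ∈ C

theorem IsPathIn.isCycleIn_insert (h : IsPathIn A C L) (hu : u ∈ L.getLast?) (hv : v ∈ L.head?) :
    IsCycleIn A (insert s(u, v) C) L where
  toIsPathIn := h.mono subset_rfl (subset_insert _ _)
  closed u' hu' v' hv' := by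
    rw [Option.mem_unique hu' hu, Option.mem_unique hv' hv]
    exact mem_insert_self _ _

theorem IsCycleIn.exists_isPathIn_length_lt (h : IsCycleIn A C L) (hxL : x ∈ L) (hyA : y ∈ A)
    (hyL : y ∉ L) (hyx : s(y, x) ∈ C) : ∃ L', IsPathIn A C L' ∧ L.length < L'.length := by
  obtain ⟨P, Q, rfl⟩ := List.append_of_mem hxL
  obtain ⟨hP, hQ, -⟩ := List.isChain_append.1 h.isChain
  have hperm : (x :: Q ++ P).Perm (P ++ x :: Q) := List.perm_append_comm
  have hrotated : IsPathIn A C (x :: Q ++ P) := by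
    refine ⟨hperm.nodup_iff.2 h.nodup, ?_, List.isChain_append.2 ⟨hQ, hP, fun u hu v hv => ?_⟩⟩
    · exact (List.toFinset_eq_of_perm _ _ hperm).trans_subset h.subset
    · refine h.closed u ?_ v ?_
      · simpa [List.getLast?_append, List.getLast?_cons] using hu
      · simp [List.head?_append, Option.mem_def.1 hv]
  refine ⟨y :: (x :: Q ++ P), hrotated.cons hyA (by rwa [hperm.mem_iff]) (by simpa using hyx), ?_⟩
  simp only [List.length_cons, hperm.length_eq, Nat.lt_succ_self]

/-- `L` is a path inside `A` with edges from `C`, and no such path has more vertices. -/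
structure IsLongestPathIn (A : Finset V) (C : Finset (Sym2 V)) (L : List V) : Prop
    extends IsPathIn A C L where
  length_le_length {L' : List V} (h : IsPathIn A C L') : L'.length ≤ L.length

theorem exists_isLongestPathIn (A : Finset V) (C : Finset (Sym2 V)) :
    ∃ L, IsLongestPathIn A C L := by
  let lengths : Set ℕ := {n | ∃ L, IsPathIn A C L ∧ L.length = n}
  have hbdd : BddAbove lengths := ⟨#A, by rintro _ ⟨L, hL, rfl⟩; exact hL.length_le⟩
  have hnil : IsPathIn A C [] := ⟨by simp, by simp, by simp⟩
  obtain ⟨L, hL, hlen⟩ := Nat.sSup_mem (s := lengths) ⟨0, [], hnil, rfl⟩ hbdd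
  exact ⟨L, hL, fun {L'} hL' => hlen ▸ le_csSup hbdd ⟨L', hL', rfl⟩⟩

theorem IsPathIn.isLongestPathIn (h : IsPathIn A C L) (hL : L.length = #A) :
    IsLongestPathIn A C L :=
  ⟨h, fun h' => hL ▸ h'.length_le⟩

namespace IsLongestPathIn

theorem of_length_eq (h : IsLongestPathIn A C L) (h' : IsPathIn A C L')
    (hlen : L'.length = L.length) : IsLongestPathIn A C L' :=
  ⟨h', fun h'' => hlen ▸ h.length_le_length h''⟩

theorem mem_of_mk_mem (h : IsLongestPathIn A C L) (hv : v ∈ L.head?) (hxA : x ∈ A)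
    (hvx : s(v, x) ∈ C) : x ∈ L := by
  by_contra hxL
  have hlong : IsPathIn A C (x :: L) := h.toIsPathIn.cons hxA hxL fun u hu => by
    rwa [Option.mem_unique hu hv, Sym2.eq_swap]
  simpa using h.length_le_length hlong

end IsLongestPathIn

namespace IsExpander

theorem exists_endpoints (h : IsExpander A k C) (hL : IsLongestPathIn A C L) (hne : L ≠ []) :
    ∃ S ⊆ L.toFinset, k ≤ #S ∧ ∀ v ∈ S, ∃ L', IsLongestPathIn A C L' ∧ L'.Perm L ∧
      v ∈ L'.head? ∧ L'.getLast? = L.getLast? := by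
  let r (u v : V) : Prop := s(u, v) ∈ C
  have hrot (v : V) (hv : v ∈ rotationEndpoints r L) : ∃ L', IsLongestPathIn A C L' ∧
      L'.Perm L ∧ v ∈ L'.head? ∧ L'.getLast? = L.getLast? := by
    obtain ⟨L', hL', hv⟩ := mem_rotationEndpoints_iff.1 hv
    exact ⟨L', hL.of_length_eq (hL.of_isRotation hL') hL'.perm.length_eq, hL'.perm, hv,
      hL'.getLast?_eq⟩
  have hsub : rotationEndpoints r L ⊆ L.toFinset := rotationEndpoints_subset
  obtain ⟨W, hW, hcover⟩ := exists_card_le_three_mul_card_rotationEndpoints r hL.nodup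
  obtain ⟨v, hv⟩ : (rotationEndpoints r L).Nonempty :=
    ⟨L.head hne, mem_rotationEndpoints_iff.2 ⟨L, .refl, List.head_mem_head? hne⟩⟩
  refine ⟨_, hsub, le_of_not_ge fun hk => ?_, hrot⟩
  obtain ⟨v, hv, x, hx, hxW, hvx⟩ := h _ (hsub.trans hL.subset) ⟨v, hv⟩ hk W hW
  obtain ⟨L', hL', hperm, hhead, -⟩ := hrot v hv
  exact hxW (hcover v hv x (hperm.mem_iff.1 (hL'.mem_of_mk_mem hhead hx hvx)) hvx)

end IsExpander

open Classical in
/-- The edges inside `A` whose addition to `C` creates a path on more than `ℓ` vertices. -/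
noncomputable def boosters (A : Finset V) (C : Finset (Sym2 V)) (ℓ : ℕ) : Finset (Sym2 V) :=
  {e ∈ edgesIn A | ∃ L, IsPathIn A (insert e C) L ∧ ℓ < L.length}

theorem mem_boosters_iff {e : Sym2 V} : e ∈ boosters A C ℓ ↔
    e ∈ edgesIn A ∧ ∃ L, IsPathIn A (insert e C) L ∧ ℓ < L.length := by
  simp [boosters]

theorem boosters_subset : boosters A C ℓ ⊆ edgesIn A := by
  classical exact filter_subset _ _

theorem IsPathIn.mk_mem_boosters_of_notMem (h : IsPathIn A C L) (hv : v ∈ L.head?) (hxA : x ∈ A)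
    (hxL : x ∉ L) : s(v, x) ∈ boosters A C L.length := by
  have hvL : v ∈ L := List.mem_of_mem_head? hv
  refine mem_boosters_iff.2 ⟨mk_mem_edgesIn_iff.2 ⟨?_, hxA, ?_⟩, x :: L, ?_, by simp⟩
  · exact h.subset (List.mem_toFinset.2 hvL)
  · rintro rfl
    exact hxL hvL
  · refine (h.mono subset_rfl (subset_insert _ _)).cons hxA hxL fun u hu => ?_
    rw [Option.mem_unique hu hv, Sym2.eq_swap]
    exact mem_insert_self _ _

theorem IsPathIn.mk_mem_boosters_of_ends (h : IsPathIn A C L) (hlen : 1 < L.length)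
    (hu : u ∈ L.getLast?) (hv : v ∈ L.head?) (hxL : x ∈ L) (hyA : y ∈ A) (hyL : y ∉ L)
    (hyx : s(y, x) ∈ C) : s(u, v) ∈ boosters A C L.length := by
  have hmem {w : V} (hw : w ∈ L) : w ∈ A := h.subset (List.mem_toFinset.2 hw)
  exact mem_boosters_iff.2 ⟨mk_mem_edgesIn_iff.2 ⟨hmem (List.mem_of_mem_getLast? hu),
    hmem (List.mem_of_mem_head? hv), h.ne_of_ends hlen hu hv⟩,
    (h.isCycleIn_insert hu hv).exists_isPathIn_length_lt hxL hyA hyL (mem_insert_of_mem hyx)⟩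

namespace IsExpander

theorem exists_starEdges_subset_boosters (h : IsExpander A k C) (hL : IsLongestPathIn A C L)
    (hlen : 1 < L.length) (hlt : L.length < #A) (hv : v ∈ L.head?) :
    ∃ T, k ≤ #T ∧ starEdges v T ⊆ boosters A C L.length := by
  have hcard : 0 < #(A \ L.toFinset) := by
    rw [card_sdiff_of_subset hL.subset, hL.card_toFinset]
    omega
  rcases le_total k #(A \ L.toFinset) with hmany | hfew
  · refine ⟨A \ L.toFinset, hmany, starEdges_subset_iff.2 fun x hx => ?_⟩
    obtain ⟨hxA, hxL⟩ := mem_sdiff.1 hx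
    exact hL.mk_mem_boosters_of_notMem hv hxA (by simpa using hxL)
  · obtain ⟨y, hy, x, hxA, hxout, hyx⟩ :=
      h (A \ L.toFinset) sdiff_subset (card_pos.1 hcard) hfew _ (Nat.le_mul_of_pos_left _ three_pos)
    have hxL : x ∈ L := by simpa [hxA] using hxout
    obtain ⟨hyA, hyL⟩ : y ∈ A ∧ y ∉ L := by simpa using hy
    have hrev : IsLongestPathIn A C L.reverse :=
      hL.of_length_eq hL.reverse List.length_reverse
    obtain ⟨T, -, hT, hends⟩ := h.exists_endpoints hrev (by rintro h; simp_all)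
    refine ⟨T, hT, starEdges_subset_iff.2 fun t ht => ?_⟩
    obtain ⟨L', hL', hperm, ht, hlast⟩ := hends t ht
    replace hperm : L'.Perm L := hperm.trans L.reverse_perm
    rw [← hperm.length_eq] at hlen ⊢
    refine hL'.mk_mem_boosters_of_ends hlen ?_ ht (hperm.mem_iff.2 hxL) hyA
      (fun hyL' => hyL (hperm.mem_iff.1 hyL')) hyx
    rw [hlast]
    simpa using hv

theorem sq_le_two_mul_card_boosters (h : IsExpander A k C) (hk : 2 ≤ k)
    (hL : IsLongestPathIn A C L) (hne : L ≠ []) (hlt : L.length < #A) :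
    k * k ≤ 2 * #(boosters A C L.length) := by
  obtain ⟨S, hSL, hS, hends⟩ := h.exists_endpoints hL hne
  have hlen : 1 < L.length := by
    have := card_le_card hSL
    rw [hL.card_toFinset] at this
    omega
  refine (Nat.mul_le_mul_right k hS).trans
    (card_mul_le_two_mul_card_of_starEdges_subset fun v hv => ?_)
  obtain ⟨L', hL', hperm, hv, -⟩ := hends v hv
  rw [← hperm.length_eq] at hlen hlt ⊢
  exact h.exists_starEdges_subset_boosters hL' hlen hlt hv

theorem canForce_spanning_path (hE : IsExpander A k C) (hk : 2 ≤ k) (hA : A.Nonempty)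
    (hL : IsPathIn A C L) (hlen : #A ≤ L.length + t)
    (hK : 2 * (#(K ∩ edgesIn A) + t * (b + 1)) ≤ k * k) :
    CanForce (edgesIn A) b
      (fun C' _ => IsExpander A k C' ∧ ∃ L, IsPathIn A C' L ∧ L.length = #A) t C K := by
  induction t generalizing C K L with
  | zero => exact .now ⟨hE, L, hL, hL.length_le.antisymm hlen⟩
  | succ t ih =>
    obtain ⟨M, hM⟩ := exists_isLongestPathIn A C
    have hLM := hM.length_le_length hL
    rcases hM.length_le.eq_or_lt with hspan | hlt
    · exact .now ⟨hE, M, hM.toIsPathIn, hspan⟩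
    have hne : M ≠ [] := by
      obtain ⟨a, ha⟩ := hA
      have hlen_a := hM.length_le_length (L' := [a]) ⟨by simp, by simpa using ha, by simp⟩
      rintro rfl
      simp at hlen_a
    have hboost := hE.sq_le_two_mul_card_boosters hk hM hne hlt
    have hsub : boosters A C M.length ⊆ edgesIn A := boosters_subset
    have hused : #(boosters A C M.length ∩ K) ≤ #(K ∩ edgesIn A) := card_le_card fun e he =>
      mem_inter.2 ⟨(mem_inter.1 he).2, hsub (mem_inter.1 he).1⟩
    refine .offer_of_le_card (I := boosters A C M.length \ K) (sdiff_subset_sdiff hsub subset_rfl)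
      ?_ fun O hO hOcard e he => ?_
    · have hsplit := card_inter_add_card_sdiff (boosters A C M.length) K
      grind
    · obtain ⟨-, L', hL', hlt'⟩ := mem_boosters_iff.1 (mem_sdiff.1 (hO he)).1
      refine ih (hE.mono (subset_insert e C)) hL' (by omega) (le_trans ?_ hK)
      have hcount : #((K ∪ O) ∩ edgesIn A) ≤ #(K ∩ edgesIn A) + (b + 1) := by
        rw [union_inter_distrib_right, ← hOcard]
        exact (card_union_le _ _).trans (Nat.add_le_add_left (card_le_card inter_subset_left) _)
      linarith

end IsExpander

end Path

section Potential

variable {V : Type*} [DecidableEq V] {A D S : Finset V} {B : Finset (Finset V × Finset V)}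
  {C K : Finset (Sym2 V)} {T : V → Finset V} {τ : Multiset V} {b m : ℕ} {u v x : V}

/-- If every `v` in `τ` is joined to a random vertex, and each set `W` contains that vertex with
probability `#W / m`, then this is the expected number of pairs `(S, W)` in `B` such that all
vertices of `S` are joined to vertices of `W` only. -/
noncomputable def potential (m : ℕ) (τ : Multiset V) (B : Finset (Finset V × Finset V)) : ℝ :=
  ∑ p ∈ B, ((#p.2 : ℝ) / m) ^ τ.countP (· ∈ p.1)

/-- The pairs `(S, W)` in `B` for which the edge from `v` to `x` does not lead from `S` out
of `W`. -/
def survivors (B : Finset (Finset V × Finset V)) (v x : V) : Finset (Finset V × Finset V) :=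
  {p ∈ B | v ∈ p.1 → x ∈ p.2}

theorem sum_potential_survivors_le (hm : 0 < m) (hD : m ≤ #D) :
    ∑ x ∈ D, potential m τ (survivors B v x) ≤ #D * potential m (v ::ₘ τ) B := by
  simp only [potential, survivors, sum_filter, mul_sum]
  rw [sum_comm]
  refine sum_le_sum fun p _ => ?_
  have : (0 : ℝ) < m := by exact_mod_cast hm
  have hmD : (m : ℝ) ≤ #D := by exact_mod_cast hD
  rw [← sum_filter, sum_const, nsmul_eq_mul]
  by_cases hv : v ∈ p.1
  · have hsub : {x ∈ D | v ∈ p.1 → x ∈ p.2} ⊆ p.2 := fun x hx => (mem_filter.1 hx).2 hv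
    rw [Multiset.countP_cons_of_pos _ hv, pow_succ', ← mul_assoc]
    gcongr
    calc (#{x ∈ D | v ∈ p.1 → x ∈ p.2} : ℝ) ≤ #p.2 := by
          exact_mod_cast card_le_card hsub
      _ = m * (#p.2 / m) := by field_simp
      _ ≤ #D * (#p.2 / m) := by gcongr
  · rw [Multiset.countP_cons_of_neg _ hv]
    gcongr
    exact filter_subset _ _

theorem card_le_card_potential_survivors_lt_one_add (hm : 0 < m)
    (hpot : potential m (v ::ₘ τ) B < 1) :
    #D ≤ #{x ∈ D | potential m τ (survivors B v x) < 1} + m := by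
  rw [← card_filter_add_card_filter_not (s := D) fun x => potential m τ (survivors B v x) < 1]
  refine Nat.add_le_add_left (le_of_lt ?_) _
  set D' := {x ∈ D | ¬ potential m τ (survivors B v x) < 1}
  by_contra! hD'
  have hpos : (0 : ℝ) < #D' := by exact_mod_cast hm.trans_le hD'
  have hle : (#D' : ℝ) ≤ #D' * potential m (v ::ₘ τ) B :=
    calc (#D' : ℝ) = ∑ x ∈ D', 1 := by simp
      _ ≤ ∑ x ∈ D', potential m τ (survivors B v x) :=
        sum_le_sum fun x hx => not_lt.1 (mem_filter.1 hx).2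
      _ ≤ _ := sum_potential_survivors_le hm hD'
  nlinarith

theorem card_fresh_le (hTasymm : ∀ v x, x ∈ T v → v ∉ T x) (hS : S ⊆ T v) (u : V) :
    #{x ∈ T u | s(u, x) ∉ K} ≤
      #{x ∈ T u | s(u, x) ∉ K ∪ starEdges v S} + if u = v then #S else 0 := by
  split_ifs with huv
  · subst huv
    refine (card_le_card fun x hx => ?_).trans (card_union_le _ S)
    by_cases hxS : x ∈ S
    · exact mem_union_right _ hxS
    · have hu : u ∉ S := fun hu => hTasymm u u (hS hu) (hS hu)
      exact mem_union_left _ (by simpa [mk_mem_starEdges_iff, hxS, hu] using hx)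
  · refine card_le_card fun x hx => ?_
    obtain ⟨hxT, hxK⟩ := mem_filter.1 hx
    refine mem_filter.2 ⟨hxT, notMem_union.2 ⟨hxK, fun hstar => ?_⟩⟩
    obtain ⟨rfl, -⟩ | ⟨rfl, hu⟩ := mk_mem_starEdges_iff.1 hstar
    · exact huv rfl
    · exact hTasymm _ _ hxT (hS hu)

theorem count_mul_add_le_card_fresh (hTasymm : ∀ v x, x ∈ T v → v ∉ T x) (hS : S ⊆ T v)
    (hScard : #S = b + 1)
    (hfresh : ∀ u ∈ v ::ₘ τ, (v ::ₘ τ).count u * (b + 1) + m ≤ #{x ∈ T u | s(u, x) ∉ K}) :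
    ∀ u ∈ τ, τ.count u * (b + 1) + m ≤ #{x ∈ T u | s(u, x) ∉ K ∪ starEdges v S} := by
  intro u hu
  have hcount := hfresh u (Multiset.mem_cons_of_mem hu)
  have hloss := card_fresh_le (K := K) hTasymm hS u
  rw [Multiset.count_cons, add_mul, ite_mul, one_mul, zero_mul] at hcount
  rw [hScard] at hloss
  omega

/-- Derandomised union bound: Waiter goes through the vertices `v` in `τ`, each time offering only
edges to those `x` in `T v` which keep the potential below one. By averaging, fewer than `m`
vertices have to be avoided. As `T` is asymmetric, no edge is reserved for both of its ends. -/
theorem canForce_hasExit (hTA : ∀ v, T v ⊆ A) (hTasymm : ∀ v x, x ∈ T v → v ∉ T x)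
    (hτA : ∀ v ∈ τ, v ∈ A) (hm : 0 < m)
    (hfresh : ∀ v ∈ τ, τ.count v * (b + 1) + m ≤ #{x ∈ T v | s(v, x) ∉ K})
    (hpot : potential m τ B < 1) :
    CanForce (edgesIn A) b (fun C' _ => ∀ p ∈ B, HasExit A C' p.1 p.2) τ.card C K := by
  induction τ using Multiset.induction generalizing B C K with
  | empty =>
    obtain rfl : B = ∅ := by
      have hcard : (#B : ℝ) < 1 := by simpa [potential] using hpot
      exact card_eq_zero.1 (Nat.lt_one_iff.1 (by exact_mod_cast hcard))
    exact .now (by simp)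
  | cons v τ ih =>
    have hvA : v ∈ A := hτA v (Multiset.mem_cons_self v τ)
    set fresh := {x ∈ T v | s(v, x) ∉ K}
    set good := {x ∈ fresh | potential m τ (survivors B v x) < 1}
    have hfreshT : fresh ⊆ T v := filter_subset _ _
    have hgood : good ⊆ fresh := filter_subset _ _
    rw [Multiset.card_cons]
    refine .offer_star (v := v) (B := good) (starEdges_subset_iff.2 fun x hx => ?_) ?_
      fun S hS hScard x hx => ?_
    · obtain ⟨hxT, hxK⟩ := mem_filter.1 (hgood hx)
      refine mem_sdiff.2 ⟨mk_mem_edgesIn_iff.2 ⟨hvA, hTA v hxT, ?_⟩, hxK⟩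
      rintro rfl
      exact hTasymm v v hxT hxT
    · have hv : _ ≤ #fresh := hfresh v (Multiset.mem_cons_self v τ)
      have hcard : #fresh ≤ #good + m := card_le_card_potential_survivors_lt_one_add hm hpot
      rw [Multiset.count_cons_self, add_one_mul] at hv
      omega
    · obtain ⟨hxfresh, hxpot⟩ := mem_filter.1 (hS hx)
      have hfresh' := count_mul_add_le_card_fresh hTasymm (hS.trans (hgood.trans hfreshT)) hScard
        hfresh
      refine ((ih (fun u hu => hτA u (Multiset.mem_cons_of_mem hu)) hfresh'
        hxpot).with_history).imp fun C' K' ⟨hexit, hC, _⟩ p hp => ?_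
      by_cases hsurv : v ∈ p.1 → x ∈ p.2
      · exact hexit p (mem_filter.2 ⟨hp, hsurv⟩)
      · push Not at hsurv
        obtain ⟨hvp, hxp⟩ := hsurv
        exact ⟨v, hvp, x, hTA v (hfreshT hxfresh), hxp, hC (mem_insert_self _ _)⟩

end Potential

section UnionBound

theorem choose_le_three_mul_div_pow (N k : ℕ) : (N.choose k : ℝ) ≤ (3 * N / k) ^ k := by
  have hexp : (k : ℝ) ^ k / k.factorial ≤ 3 ^ k :=
    calc (k : ℝ) ^ k / k.factorial ≤ Real.exp k := Real.pow_div_factorial_le_exp _ k.cast_nonneg k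
      _ = Real.exp 1 ^ k := (Real.exp_one_pow k).symm
      _ ≤ 3 ^ k := by gcongr; exact Real.exp_one_lt_three.le
  have hk : (0 : ℝ) < k ^ k := by exact_mod_cast Nat.pow_self_pos
  rw [div_pow, le_div_iff₀ hk]
  calc (N.choose k : ℝ) * k ^ k ≤ N ^ k / k.factorial * k ^ k := by
        gcongr
        exact Nat.choose_le_pow_div k N
    _ = k ^ k / k.factorial * N ^ k := by ring
    _ ≤ 3 ^ k * N ^ k := by gcongr
    _ = (3 * N) ^ k := (mul_pow _ _ _).symm

theorem choose_mul_choose_mul_pow_le {N a : ℕ} (haN : 3000000 * a ≤ N) :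
    (N.choose a : ℝ) * N.choose (3 * a) * (12 * a / N) ^ (5 * a) ≤ (1 / 4) ^ a := by
  rcases a.eq_zero_or_pos with rfl | ha
  · simp
  have ha' : (0 : ℝ) < a := by exact_mod_cast ha
  have haN' : (3000000 : ℝ) * a ≤ N := by exact_mod_cast haN
  have hN : (0 : ℝ) < N := by linarith
  calc (N.choose a : ℝ) * N.choose (3 * a) * (12 * a / N) ^ (5 * a)
      ≤ (3 * N / a) ^ a * (3 * N / (3 * a : ℕ)) ^ (3 * a) * (12 * a / N) ^ (5 * a) := by
        gcongr <;> exact choose_le_three_mul_div_pow _ _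
    _ = (746496 * (a / N)) ^ a := by
        rw [pow_mul, pow_mul, ← mul_pow, ← mul_pow]
        push_cast
        congr 1
        field_simp
        norm_num
    _ ≤ (1 / 4) ^ a := by
        gcongr
        rw [mul_div_assoc', div_le_div_iff₀ hN (by norm_num)]
        linarith

theorem exists_balanced_coloring {V ι : Type*} [Fintype ι] [Nonempty ι] [DecidableEq ι]
    {A : Finset V} {m : ℕ} (hA : #A = Fintype.card ι * m) :
    ∃ c : V → ι, ∀ i, #{x ∈ A | c x = i} = m := by
  classical
  have e : A ≃ ι × Fin m := Fintype.equivOfCardEq (by simp [hA])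
  refine ⟨fun x => if h : x ∈ A then (e ⟨x, h⟩).1 else Classical.arbitrary ι, fun i => ?_⟩
  symm
  calc m = #(univ : Finset (Fin m)) := (card_fin m).symm
    _ = _ := card_bij (fun j _ => (e.symm (i, j) : V)) (by simp) (by simp) fun x hx => ?_
  obtain ⟨hxA, hxi⟩ := mem_filter.1 hx
  simp only [dif_pos hxA] at hxi
  exact ⟨(e ⟨x, hxA⟩).2, mem_univ _, by simp [← hxi]⟩

variable {V : Type*} [DecidableEq V] {A : Finset V} {C K : Finset (Sym2 V)} {b k m : ℕ}

/-- The pairs `(S, W)` which could violate expansion: nonempty sets `S ⊆ A` of at most `k` vertices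
and sets `W ⊆ A` with `#W = 3 * #S`. -/
def traps (A : Finset V) (k : ℕ) : Finset (Finset V × Finset V) :=
  (Icc 1 k).biUnion fun a => A.powersetCard a ×ˢ A.powersetCard (3 * a)

theorem isExpander_of_forall_traps (hk : 3 * k ≤ #A) (h : ∀ p ∈ traps A k, HasExit A C p.1 p.2) :
    IsExpander A k C := by
  intro S hSA hne hSk W hW
  obtain ⟨W', hWW', hW'A, hW'⟩ := exists_subsuperset_card_eq (s := W ∩ A) (n := 3 * #S)
    inter_subset_right ((card_le_card inter_subset_left).trans hW) (by omega)
  have htrap : (S, W') ∈ traps A k := by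
    simp only [traps, mem_biUnion, mem_Icc, mem_product, mem_powersetCard]
    exact ⟨#S, ⟨hne.card_pos, hSk⟩, ⟨hSA, rfl⟩, hW'A, hW'⟩
  obtain ⟨v, hv, x, hx, hxW', hvx⟩ := h _ htrap
  exact ⟨v, hv, x, hx, fun hxW => hxW' (hWW' (mem_inter.2 ⟨hxW, hx⟩)), hvx⟩

theorem countP_mem_nsmul_val {S : Finset V} (hS : S ⊆ A) (d : ℕ) :
    (d • A.val).countP (· ∈ S) = d * #S := by
  rw [Multiset.countP_nsmul, Multiset.countP_eq_card_filter, ← filter_val, ← card_def,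
    filter_mem_eq_inter, inter_eq_right.2 hS]

theorem potential_traps_lt_one (hA : #A = 4 * m) (hk : 3000000 * k ≤ #A) :
    potential m (5 • A.val) (traps A k) < 1 := by
  have hterm (a : ℕ) (ha : a ∈ Ico 1 (k + 1)) :
      potential m (5 • A.val) (A.powersetCard a ×ˢ A.powersetCard (3 * a)) ≤ (1 / 4) ^ a := by
    have hweight : ∀ p ∈ A.powersetCard a ×ˢ A.powersetCard (3 * a),
        ((#p.2 : ℝ) / m) ^ (5 • A.val).countP (· ∈ p.1) = (12 * a / #A) ^ (5 * a) := by
      intro p hp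
      obtain ⟨⟨hS, rfl⟩, -, hW⟩ := by simpa only [mem_product, mem_powersetCard] using hp
      rw [countP_mem_nsmul_val hS, hW, hA]
      push_cast
      rw [← mul_div_mul_left (3 * #p.1 : ℝ) m four_ne_zero]
      ring
    rw [potential, sum_congr rfl hweight, sum_const, card_product, card_powersetCard,
      card_powersetCard, nsmul_eq_mul, Nat.cast_mul]
    exact choose_mul_choose_mul_pow_le (by grind)
  have hdisj : (Icc 1 k : Set ℕ).PairwiseDisjoint
      fun a => A.powersetCard a ×ˢ A.powersetCard (3 * a) := fun a _ a' _ haa' =>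
    disjoint_product.2 (.inl (pairwise_disjoint_powersetCard A haa'))
  calc potential m (5 • A.val) (traps A k)
      = ∑ a ∈ Icc 1 k, potential m (5 • A.val) (A.powersetCard a ×ˢ A.powersetCard (3 * a)) :=
        sum_biUnion (by simpa using hdisj)
    _ ≤ ∑ a ∈ Ico 1 (k + 1), (1 / 4 : ℝ) ^ a := sum_le_sum hterm
    _ ≤ (1 / 4) ^ 1 / (1 - 1 / 4) := geom_sum_Ico_le_of_lt_one (by norm_num) (by norm_num)
    _ < 1 := by norm_num

theorem canForce_isExpander (hA : #A = 12000000 * k) (hk : 0 < k) (hb : 5 * (b + 1) ≤ 1000000 * k)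
    (hK : Disjoint K (edgesIn A)) :
    CanForce (edgesIn A) b (fun C' _ => IsExpander A k C') (5 * #A) C K := by
  obtain ⟨c, hc⟩ := exists_balanced_coloring (ι := ZMod 3) (m := 4000000 * k) (A := A)
    (by rw [hA, ZMod.card]; ring)
  let T (v : V) : Finset V := {x ∈ A | c x = c v + 1}
  have hTA (v : V) : T v ⊆ A := filter_subset _ _
  have hTasymm (v x : V) (hx : x ∈ T v) : v ∉ T x := fun hv => by
    have hxv := (mem_filter.1 hx).2
    rw [(mem_filter.1 hv).2] at hxv
    generalize c x = i at hxv
    revert i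
    decide
  have hfresh (v : V) (hv : v ∈ 5 • A.val) :
      (5 • A.val).count v * (b + 1) + 3000000 * k ≤ #{x ∈ T v | s(v, x) ∉ K} := by
    have hvA : v ∈ A := Multiset.mem_of_mem_nsmul hv
    have hall : {x ∈ T v | s(v, x) ∉ K} = T v := filter_true_of_mem fun x hx hvx => by
      refine disjoint_left.1 hK hvx (mk_mem_edgesIn_iff.2 ⟨hvA, hTA v hx, ?_⟩)
      rintro rfl
      exact hTasymm v v hx hx
    rw [hall, hc, Multiset.count_nsmul, Multiset.count_eq_one_of_mem A.nodup hvA]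
    omega
  have hforce := canForce_hasExit (C := C) (B := traps A k) hTA hTasymm
    (fun v hv => Multiset.mem_of_mem_nsmul hv) (by omega) hfresh
    (potential_traps_lt_one (by omega) (by omega))
  rw [Multiset.card_nsmul, ← card_def] at hforce
  exact hforce.imp fun C' _ => isExpander_of_forall_traps (by omega)

theorem canForce_expander_spanning_path (hA : #A = 12000000 * k) (hb : 1 ≤ b)
    (hk : 1000000000 * b ≤ k) (hK : Disjoint K (edgesIn A)) :
    CanForce (edgesIn A) b
      (fun C' _ => IsExpander A k C' ∧ ∃ L, IsPathIn A C' L ∧ L.length = #A) (6 * #A) C K := by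
  have hforce := (canForce_isExpander (C := C) (b := b) hA (by omega) (by omega) hK).with_history
  rw [disjoint_iff_inter_eq_empty.1 hK, card_empty, zero_add] at hforce
  rw [show 6 * #A = 5 * #A + #A by omega]
  refine hforce.bind subset_rfl fun C' K' ⟨hE, _, _, hcount⟩ => ?_
  refine hE.canForce_spanning_path (L := []) (by omega) (card_pos.1 (by omega))
    ⟨by simp, by simp, by simp⟩ (by simp) ?_
  calc 2 * (#(K' ∩ edgesIn A) + #A * (b + 1)) ≤ 2 * (5 * #A * (b + 1) + #A * (b + 1)) := by gcongr
    _ = 144000000 * k * (b + 1) := by rw [hA]; ring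
    _ ≤ 144000000 * k * (2 * b) := by gcongr; omega
    _ = 288000000 * b * k := by ring
    _ ≤ k * k := by gcongr; omega

end UnionBound

section GrownPath

variable {V : Type*} [DecidableEq V] {A S U : Finset V} {C C' K K' : Finset (Sym2 V)}
  {P : Finset (Sym2 V) → Finset (Sym2 V) → Prop} {L rest : List V} {b k t : ℕ} {p q v x : V}

/-- The position in the first phase, on the complete graph with vertex set `U`: Client's path has
been grown from its last entry `p` to its first entry `q`, and no edge has been offered yet which
avoids all vertices of the path other than `q`. Only the first round has offered edges from `p` to
vertices which may remain outside the path, so `p` can still be joined to almost all of them. -/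
structure GrownPath (U : Finset V) (C K : Finset (Sym2 V)) (b : ℕ) (p q : V) (rest : List V) :
    Prop where
  isPathIn : IsPathIn U C (q :: rest)
  mem_getLast? : p ∈ (q :: rest).getLast?
  exists_mem_rest : ∀ e ∈ K, ∃ v ∈ rest, v ∈ e
  card_start_le : #{x ∈ U | s(p, x) ∈ K} ≤ b + 1

namespace GrownPath

theorem singleton (hp : p ∈ U) : GrownPath U ∅ ∅ b p p [] :=
  ⟨⟨by simp, by simpa using hp, by simp⟩, by simp, by simp, by simp⟩

theorem mk_notMem (h : GrownPath U C K b p q rest) (hx : x ∉ q :: rest) : s(q, x) ∉ K := by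
  intro he
  obtain ⟨v, hv, hve⟩ := h.exists_mem_rest _ he
  obtain rfl | rfl := Sym2.mem_iff.1 hve
  · exact (List.nodup_cons.1 h.isPathIn.nodup).1 hv
  · exact hx (List.mem_cons_of_mem _ hv)

theorem disjoint_edgesIn (h : GrownPath U C K b p q rest) :
    Disjoint K (edgesIn (U \ (q :: rest).toFinset)) := by
  refine disjoint_left.2 fun e he heA => ?_
  obtain ⟨v, hv, x, rfl⟩ := h.exists_mem_rest e he
  exact (mem_sdiff.1 (mk_mem_edgesIn_iff.1 heA).1).2 (by simp [hv])

theorem eq_nil_of_start_eq (h : GrownPath U C K b p p rest) : rest = [] := by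
  by_contra hne
  have hlen : 1 < (p :: rest).length := Nat.succ_lt_succ (List.length_pos_iff.2 hne)
  exact h.isPathIn.ne_of_ends hlen h.mem_getLast? rfl rfl

theorem card_start_union_starEdges_le (h : GrownPath U C K b p q rest)
    (hS : S ⊆ U \ (q :: rest).toFinset) (hScard : #S = b + 1) :
    #{x ∈ U | s(p, x) ∈ K ∪ starEdges q S} ≤ b + 1 := by
  have hpL : p ∈ q :: rest := List.mem_of_mem_getLast? h.mem_getLast?
  have hpS : p ∉ S := fun hpS => (mem_sdiff.1 (hS hpS)).2 (List.mem_toFinset.2 hpL)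
  by_cases hpq : p = q
  · subst hpq
    obtain rfl := h.eq_nil_of_start_eq
    obtain rfl : K = ∅ := eq_empty_of_forall_notMem fun e he => by
      simpa using h.exists_mem_rest e he
    rw [← hScard]
    exact card_le_card fun y hy => by simpa [mk_mem_starEdges_iff, hpS] using (mem_filter.1 hy).2
  · refine (card_le_card fun y hy => ?_).trans h.card_start_le
    simpa [mk_mem_starEdges_iff, hpS, hpq] using hy

theorem extend (h : GrownPath U C K b p q rest) (hS : S ⊆ U \ (q :: rest).toFinset)
    (hScard : #S = b + 1) (hx : x ∈ S) :
    GrownPath U (insert s(q, x) C) (K ∪ starEdges q S) b p x (q :: rest) where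
  isPathIn := by
    obtain ⟨hxU, hxL⟩ := mem_sdiff.1 (hS hx)
    refine (h.isPathIn.mono subset_rfl (subset_insert _ _)).cons hxU (by simpa using hxL) ?_
    simp [Sym2.eq_swap]
  mem_getLast? := by simpa using h.mem_getLast?
  exists_mem_rest e he := by
    rcases mem_union.1 he with heK | hestar
    · obtain ⟨v, hv, hve⟩ := h.exists_mem_rest e heK
      exact ⟨v, List.mem_cons_of_mem _ hv, hve⟩
    · obtain ⟨y, -, rfl⟩ := mem_image.1 hestar
      exact ⟨q, List.mem_cons_self, Sym2.mem_mk_left q y⟩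
  card_start_le := h.card_start_union_starEdges_le hS hScard

theorem canForce (h : GrownPath U C K b p q rest)
    (hk : (q :: rest).length + k + b ≤ #U) :
    CanForce (edgesIn U) b (fun C' K' => ∃ q' rest', GrownPath U C' K' b p q' rest' ∧
      (q' :: rest').length = (q :: rest).length + k) k C K := by
  induction k generalizing C K q rest with
  | zero => exact .now ⟨q, rest, h, rfl⟩
  | succ k ih =>
    refine .offer_star (v := q) (B := U \ (q :: rest).toFinset)
      (starEdges_subset_iff.2 fun x hx => ?_) ?_ fun S hS hScard x hx => ?_
    · obtain ⟨hxU, hxL⟩ := mem_sdiff.1 hx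
      rw [List.mem_toFinset] at hxL
      refine mem_sdiff.2 ⟨mk_mem_edgesIn_iff.2 ⟨h.isPathIn.subset (by simp), hxU, ?_⟩,
        h.mk_notMem hxL⟩
      rintro rfl
      exact hxL List.mem_cons_self
    · rw [card_sdiff_of_subset h.isPathIn.subset, h.isPathIn.card_toFinset]
      omega
    · have hlen : (x :: q :: rest).length = (q :: rest).length + 1 := rfl
      refine (ih (h.extend hS hScard hx) (by omega)).imp fun C' K' ⟨q', rest', h', hlen'⟩ =>
        ⟨q', rest', h', by omega⟩

end GrownPath

theorem IsExpander.canForce_join (hE : IsExpander A k C) (hL : IsPathIn A C L)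
    (hspan : L.length = #A) (hne : L ≠ []) (hAU : A ⊆ U) (hvU : v ∈ U) (hvA : v ∉ A)
    (hk : #{x ∈ A | s(v, x) ∈ K} + (b + 1) ≤ k)
    (h : ∀ S ⊆ A, #S = b + 1 → ∀ x L', IsPathIn A C L' → L'.length = #A →
      L'.getLast? = L.getLast? → x ∈ L'.head? →
      CanForce (edgesIn U) b P t (insert s(v, x) C) (K ∪ starEdges v S)) :
    CanForce (edgesIn U) b P (t + 1) C K := by
  obtain ⟨S, hSL, hkS, hends⟩ := hE.exists_endpoints (hL.isLongestPathIn hspan) hne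
  have hSA : S ⊆ A := hSL.trans hL.subset
  refine .offer_star (v := v) (B := {x ∈ S | s(v, x) ∉ K})
    (starEdges_subset_iff.2 fun x hx => ?_) ?_ fun O hO hOcard x hx => ?_
  · obtain ⟨hxS, hxK⟩ := mem_filter.1 hx
    refine mem_sdiff.2 ⟨mk_mem_edgesIn_iff.2 ⟨hvU, hAU (hSA hxS), ?_⟩, hxK⟩
    rintro rfl
    exact hvA (hSA hxS)
  · have hsplit := card_filter_add_card_filter_not (s := S) fun x => s(v, x) ∈ K
    have hused := card_le_card (filter_subset_filter (fun x => s(v, x) ∈ K) hSA)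
    omega
  · have hOS : O ⊆ S := hO.trans (filter_subset _ _)
    obtain ⟨L', hL', hperm, hhead, hlast⟩ := hends x (hOS hx)
    exact h O (hOS.trans hSA) hOcard x L' hL'.toIsPathIn (hperm.length_eq.trans hspan) hlast hhead

theorem IsPathIn.isCycleIn_append_insert (h : IsPathIn U C (q :: rest))
    (hp : p ∈ (q :: rest).getLast?) (hL : IsPathIn U C L) (hx : x ∈ L.head?)
    (hdisj : L.Disjoint (q :: rest)) (hjoin : ∀ u ∈ L.getLast?, s(u, q) ∈ C) :
    IsCycleIn U (insert s(p, x) C) (L ++ q :: rest) := by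
  refine (hL.append h hdisj ?_).isCycleIn_insert ?_ ?_
  · simpa using hjoin
  · simpa [List.getLast?_append, List.getLast?_cons] using hp
  · simp [List.head?_append, Option.mem_def.1 hx]

/-- The rotations behind the second round fix the end of the spanning path of `A` which the first
round has attached to `q`. -/
theorem IsExpander.canForce_isCycleIn (hE : IsExpander A k C) (hL : IsPathIn A C L)
    (hspan : L.length = #A) (hne : L ≠ []) (hpath : IsPathIn U C (q :: rest))
    (hp : p ∈ (q :: rest).getLast?) (hA : A = U \ (q :: rest).toFinset)
    (hqk : #{x ∈ A | s(q, x) ∈ K} + (b + 1) ≤ k)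
    (hpk : #{x ∈ A | s(p, x) ∈ K} + 2 * (b + 1) ≤ k) :
    CanForce (edgesIn U) b (fun C' _ => ∃ M, IsCycleIn U C' M ∧ M.length = #U) 2 C K := by
  have hAU : A ⊆ U := hA ▸ sdiff_subset
  have hout {v : V} (hv : v ∈ q :: rest) : v ∉ A := fun hvA =>
    (mem_sdiff.1 (hA ▸ hvA)).2 (List.mem_toFinset.2 hv)
  have hpL : p ∈ q :: rest := List.mem_of_mem_getLast? hp
  have hin {v : V} (hv : v ∈ q :: rest) : v ∈ U := hpath.subset (List.mem_toFinset.2 hv)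
  refine hE.canForce_join hL hspan hne hAU (hin List.mem_cons_self) (hout List.mem_cons_self) hqk
    fun S hSA hScard a L₁ hL₁ hspan₁ _ ha => ?_
  have hCC₁ : C ⊆ insert s(q, a) C := subset_insert _ _
  have hused : #{x ∈ A | s(p, x) ∈ K ∪ starEdges q S} ≤ #{x ∈ A | s(p, x) ∈ K} + #S := by
    refine (card_le_card fun x hx => ?_).trans (card_union_le _ _)
    have hpS : p ∉ S := fun hpS => hout hpL (hSA hpS)
    simp only [mem_filter, mem_union, mk_mem_starEdges_iff, hpS] at hx ⊢
    tauto
  refine (hE.mono hCC₁).canForce_join (hL₁.mono subset_rfl hCC₁).reverse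
    (List.length_reverse.trans hspan₁) (by rintro h; simp_all) hAU (hin hpL) (hout hpL) (by omega)
    fun _ _ _ x L₂ hL₂ hspan₂ hlast hx => .now ⟨L₂ ++ q :: rest, ?_, ?_⟩
  · refine (hpath.mono subset_rfl hCC₁).isCycleIn_append_insert hp (hL₂.mono hAU subset_rfl) hx
      (fun w hw hw' => hout hw' (hL₂.subset (List.mem_toFinset.2 hw))) fun u hu => ?_
    rw [hlast, List.getLast?_reverse] at hu
    rw [Option.mem_unique hu ha, Sym2.eq_swap]
    exact mem_insert_self _ _
  · rw [List.length_append, hspan₂, hA, ← hpath.card_toFinset,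
      card_sdiff_add_card_eq_card hpath.subset]

theorem GrownPath.canForce_isCycleIn (h : GrownPath U C K b p q rest) (hb : 1 ≤ b)
    (hk : 1000000000 * b ≤ k) (hcard : #U = 12000000 * k + (q :: rest).length) :
    CanForce (edgesIn U) b (fun C' _ => ∃ M, IsCycleIn U C' M ∧ M.length = #U)
      (6 * (12000000 * k) + 2) C K := by
  generalize hA : U \ (q :: rest).toFinset = A
  have hAcard : #A = 12000000 * k := by
    rw [← hA, card_sdiff_of_subset h.isPathIn.subset, h.isPathIn.card_toFinset]
    omega
  have hout {v : V} (hv : v ∈ q :: rest) : v ∉ A := fun hvA =>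
    (mem_sdiff.1 (hA ▸ hvA)).2 (List.mem_toFinset.2 hv)
  have hforce := (canForce_expander_spanning_path (C := C) hAcard hb hk
    (hA ▸ h.disjoint_edgesIn)).with_history
  rw [hAcard] at hforce
  refine hforce.bind (edgesIn_mono (hA ▸ sdiff_subset))
    fun C' K' ⟨⟨hE, L, hL, hspan⟩, hC, hK, _⟩ => ?_
  have hused {v : V} (hv : v ∈ q :: rest) :
      {x ∈ A | s(v, x) ∈ K'} ⊆ {x ∈ A | s(v, x) ∈ K} := fun x hx => by
    obtain ⟨hxA, hx⟩ := mem_filter.1 hx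
    refine mem_filter.2 ⟨hxA, (mem_union.1 (hK hx)).resolve_right fun he => ?_⟩
    exact hout hv (mk_mem_edgesIn_iff.1 he).1
  have hq : #{x ∈ A | s(q, x) ∈ K'} = 0 := card_eq_zero.2 <| filter_eq_empty_iff.2 fun x hx hqx =>
    h.mk_notMem (fun hxL => hout hxL hx)
      (mem_filter.1 (hused List.mem_cons_self (mem_filter.2 ⟨hx, hqx⟩))).2
  have hp : #{x ∈ A | s(p, x) ∈ K'} ≤ b + 1 :=
    (card_le_card ((hused (List.mem_of_mem_getLast? h.mem_getLast?)).trans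
      (filter_subset_filter _ (hA ▸ sdiff_subset)))).trans h.card_start_le
  refine hE.canForce_isCycleIn hL (by omega) ?_ (h.isPathIn.mono subset_rfl hC) h.mem_getLast?
    hA.symm (by omega) (by omega)
  rintro rfl
  simp at hspan
  omega

theorem canForce_isCycleIn (hb : 1 ≤ b) (hU : 12 * 10 ^ 15 * b < #U) :
    CanForce (edgesIn U) b (fun C' _ => ∃ M, IsCycleIn U C' M ∧ M.length = #U)
      (#U + 72 * 10 ^ 15 * b + 1) ∅ ∅ := by
  obtain ⟨p, hp⟩ : U.Nonempty := card_pos.1 (by omega)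
  have hlen : [p].length = 1 := rfl
  have hpath := (GrownPath.singleton (b := b) hp).canForce
    (k := #U - 12 * 10 ^ 15 * b - 1) (by omega)
  refine (hpath.bind subset_rfl fun C K ⟨q, rest, h, hrest⟩ =>
    h.canForce_isCycleIn (k := 10 ^ 9 * b) hb (by omega) (by omega)).mono_rounds (by omega)

end GrownPath

section HamiltonCycle

theorem IsCycleIn.exists_mem_hamFamily {n : ℕ} {A : Finset (Fin n)} {C : Finset (Sym2 (Fin n))}
    {L : List (Fin n)} (h : IsCycleIn A C L) (hlen : L.length = n) (hn : 3 ≤ n) :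
    ∃ F ∈ HamFamily n, F ⊆ C := by
  have hne : L ≠ [] := List.ne_nil_of_length_pos (by omega)
  let G : SimpleGraph (Fin n) := .fromEdgeSet C
  have hchain : L.IsChain G.Adj := by
    refine List.isChain_iff_forall_rel_of_append_cons_cons.2 ?_
    rintro u v l₁ l₂ rfl
    refine (SimpleGraph.fromEdgeSet_adj _).2
      ⟨List.isChain_iff_forall_rel_of_append_cons_cons.1 h.isChain rfl, ?_⟩
    rintro rfl
    simpa using h.nodup.of_append_right
  let w := SimpleGraph.Walk.ofSupport L hne hchain
  have hsupport : w.support = L := SimpleGraph.Walk.support_ofSupport hne hchain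
  have hwlen : w.length = n - 1 := by
    rw [SimpleGraph.Walk.length_ofSupport, hlen]
  have hwpath : w.IsPath := .mk' (by rw [hsupport]; exact h.nodup)
  have hnotMem : s(L.getLast hne, L.head hne) ∉ w.edges := fun he => by
    have := hwpath.length_eq_one_of_mem_edges (Sym2.eq_swap ▸ he)
    omega
  have hlast : L.getLast hne ∈ L.getLast? := List.getLast_mem_getLast? hne
  have hhead : L.head hne ∈ L.head? := List.head_mem_head? hne
  have hclose : G.Adj (L.getLast hne) (L.head hne) := (SimpleGraph.fromEdgeSet_adj _).2
    ⟨h.closed _ hlast _ hhead, h.ne_of_ends (by omega) hlast hhead⟩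
  let c := (w.cons hclose).mapLe le_top
  have hc : c.IsHamiltonianCycle :=
    SimpleGraph.Walk.isHamiltonianCycle_iff_isCycle_and_length_eq.2
      ⟨(SimpleGraph.Walk.isCycle_mapLe le_top).2
        ((SimpleGraph.Walk.cons_isCycle_iff w hclose).2 ⟨hwpath, hnotMem⟩), by
        rw [SimpleGraph.Walk.length_mapLe, SimpleGraph.Walk.length_cons, hwlen, Fintype.card_fin]
        omega⟩
  refine ⟨_, ⟨_, c, hc, rfl⟩, fun e he => ?_⟩
  rw [List.mem_toFinset, SimpleGraph.Walk.edges_mapLe_eq_edges] at he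
  exact (SimpleGraph.edgeSet_fromEdgeSet (C : Set (Sym2 (Fin n))) ▸
    SimpleGraph.Walk.edges_subset_edgeSet _ he).1

theorem waiterWins_hamFamily {n b : ℕ} (hb : 1 ≤ b) (hn : 12 * 10 ^ 15 * b < n) :
    WaiterWins (Kedges n) b (fun C _ => ∃ F ∈ HamFamily n, F ⊆ C) (n + 72 * 10 ^ 15 * b + 1)
      ∅ ∅ := by
  have hboard : edgesIn univ ⊆ Kedges n := by simp [edgesIn, Kedges]
  have hcycle := canForce_isCycleIn (U := (univ : Finset (Fin n))) hb (by rwa [card_fin])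
  rw [card_fin] at hcycle
  refine CanForce.waiterWins hboard (hcycle.imp ?_)
  rintro C _ ⟨M, hM, hlen⟩
  exact hM.exists_mem_hamFamily hlen (by omega)

end HamiltonCycle

/-- There exist constants `δ, C > 0` such that for every large enough `n` and every positive
integer `b ≤ δn`, in the `b`-biased Waiter-Client Hamiltonicity game on `K_n`, Waiter can win
within `n + C·b` rounds. -/
theorem WC_hamiltonicity_biased :
    ∃ δ C : ℝ, 0 < δ ∧ 0 < C ∧ ∃ n₀ : ℕ, ∀ n : ℕ, n₀ ≤ n →
      ∀ b : ℕ, 1 ≤ b → (b : ℝ) ≤ δ * n →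
        (tauWC (Kedges n) (HamFamily n) b : ℝ) ≤ (n : ℝ) + C * b := by
  refine ⟨1 / (13 * 10 ^ 15), 73 * 10 ^ 15, by norm_num, by norm_num, 0, fun n _ b hb hbn => ?_⟩
  have hlarge : 13 * 10 ^ 15 * b ≤ n := by
    rw [one_div_mul_eq_div, le_div_iff₀' (by norm_num)] at hbn
    exact_mod_cast hbn
  have hτ : tauWC (Kedges n) (HamFamily n) b ≤ n + 72 * 10 ^ 15 * b + 1 :=
    Nat.sInf_le (waiterWins_hamFamily hb (by omega))
  exact_mod_cast hτ.trans (show _ ≤ n + 73 * 10 ^ 15 * b by omega)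
end
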